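/- arXiv:2207.06693 — 4 statements merged into one kernel-verified Lean document; each statement's English description precedes it below -/
import Mathlib

section
/- For d × d complex matrices: the infimum of ‖A‖_{S_{2p}} · ‖X‖_∞ · ‖B‖_{S_{2p}} over all factorizations T = A X B (A, B, X ∈ M_d(ℂ)) equals the Schatten p-norm ‖T‖_{S_p}, for any 1 ≤ p < ∞. -/
open Matrix
open scoped ComplexOrder

/-- Operator (spectral) norm of a rectangular complex matrix. -/
noncomputable def opN {α β : Type*} [Fintype α] [Fintype β] [DecidableEq β]
    (M : Matrix α β ℂ) : ℝ :=
  ‖LinearMap.toContinuousLinearMap (Matrix.toEuclideanLin M)‖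

/-- Schatten `p`-norm of a square complex matrix: `(∑ singular values ^ p)^{1/p}`. -/
noncomputable def sNorm {n : Type*} [Fintype n] [DecidableEq n] (p : ℝ)
    (M : Matrix n n ℂ) : ℝ :=
  (∑ i, ((Matrix.posSemidef_conjTranspose_mul_self M).1.eigenvalues i) ^ (p / 2)) ^ (1 / p)

/-- A function of the spectrum only depends on the characteristic polynomial. -/
lemma sum_eig_of_charpoly {d : ℕ} {H : Matrix (Fin d) (Fin d) ℂ} (hH : H.IsHermitian)
    (a : Fin d → ℝ) (h : H.charpoly = (diagonal (fun i => (a i : ℂ))).charpoly) (f : ℝ → ℝ) :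
    ∑ i, f (hH.eigenvalues i) = ∑ i, f (a i) := by
  have h1 := hH.roots_charpoly_eq_eigenvalues
  rw [h, charpoly_diagonal, Polynomial.roots_prod _ _
    (by simp [Finset.prod_ne_zero_iff, Polynomial.X_sub_C_ne_zero])] at h1
  have h2 := congrArg (fun m => (Multiset.map (fun z : ℂ => f z.re) m).sum) h1
  simp [List.sum_ofFn] at h2
  exact h2.symm

/-- Jensen: diagonal entries are dominated by eigenvalues. -/
lemma diag_rpow_le {d : ℕ} {H : Matrix (Fin d) (Fin d) ℂ} (hH : H.PosSemidef) {p : ℝ}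
    (hp : 1 ≤ p) : ∑ i, (H i i).re ^ p ≤ ∑ i, (hH.1.eigenvalues i) ^ p := by
  set W : Matrix (Fin d) (Fin d) ℂ := hH.1.eigenvectorUnitary.1 with hW
  have hW1 : W * Wᴴ = 1 := by
    have := Unitary.coe_mul_star_self hH.1.eigenvectorUnitary
    simpa [star_eq_conjTranspose] using this
  have hW2 : Wᴴ * W = 1 := by
    have := Unitary.coe_star_mul_self hH.1.eigenvectorUnitary
    simpa [star_eq_conjTranspose] using this
  have hspec : H = W * diagonal (fun i => (hH.1.eigenvalues i : ℂ)) * Wᴴ := by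
    have := hH.1.spectral_theorem
    rw [Unitary.conjStarAlgAut_apply] at this
    exact this
  have hrow : ∀ i, ∑ j, ‖W i j‖ ^ 2 = 1 := by
    intro i
    have := congrFun (congrFun hW1 i) i
    simp only [mul_apply, conjTranspose_apply, one_apply_eq, RCLike.star_def, Complex.mul_conj'] at this
    exact_mod_cast this
  have hcol : ∀ j, ∑ i, ‖W i j‖ ^ 2 = 1 := by
    intro i
    have := congrFun (congrFun hW2 i) i
    simp only [mul_apply, conjTranspose_apply, one_apply_eq, RCLike.star_def, Complex.conj_mul'] at this
    exact_mod_cast this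
  have hdiag : ∀ i, (H i i).re = ∑ j, ‖W i j‖ ^ 2 * hH.1.eigenvalues j := by
    intro i
    have : H i i = ((∑ j, ‖W i j‖ ^ 2 * hH.1.eigenvalues j : ℝ) : ℂ) := by
      conv_lhs => rw [hspec]
      rw [mul_apply]
      simp only [mul_diagonal, conjTranspose_apply, RCLike.star_def]
      push_cast
      refine Finset.sum_congr rfl fun j _ => ?_
      rw [← Complex.mul_conj']; ring
    rw [this, Complex.ofReal_re]
  calc ∑ i, (H i i).re ^ p ≤ ∑ i, ∑ j, ‖W i j‖ ^ 2 * hH.1.eigenvalues j ^ p := by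
        refine Finset.sum_le_sum fun i _ => ?_
        rw [hdiag]
        exact Real.rpow_arith_mean_le_arith_mean_rpow _ _ _ (fun _ _ => by positivity) (hrow i)
          (fun j _ => hH.eigenvalues_nonneg j) hp
    _ = ∑ j, hH.1.eigenvalues j ^ p := by
        rw [Finset.sum_comm]
        simp_rw [← Finset.sum_mul, hcol, one_mul]

/-- Singular value decomposition. -/
lemma exists_svd {d : ℕ} (T : Matrix (Fin d) (Fin d) ℂ) :
    ∃ U V : Matrix (Fin d) (Fin d) ℂ, Uᴴ * U = 1 ∧ Vᴴ * V = 1 ∧ T * V = U * diagonal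
      (fun i => ((Real.sqrt ((posSemidef_conjTranspose_mul_self T).1.eigenvalues i) : ℝ) : ℂ)) := by
  set hH := posSemidef_conjTranspose_mul_self T
  set l := hH.1.eigenvalues with hl
  have hl0 : ∀ i, 0 ≤ l i := hH.eigenvalues_nonneg
  set W : Matrix (Fin d) (Fin d) ℂ := hH.1.eigenvectorUnitary.1 with hW
  have hW2 : Wᴴ * W = 1 := by
    have := Unitary.coe_star_mul_self hH.1.eigenvectorUnitary
    simpa [star_eq_conjTranspose] using this
  have hspec : Tᴴ * T = W * diagonal (fun i => (l i : ℂ)) * Wᴴ := by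
    have := hH.1.spectral_theorem
    rw [Unitary.conjStarAlgAut_apply] at this
    exact this
  have hG : (T * W)ᴴ * (T * W) = diagonal (fun i => (l i : ℂ)) := by
    calc (T * W)ᴴ * (T * W) = Wᴴ * (Tᴴ * T) * W := by
          simp only [conjTranspose_mul, Matrix.mul_assoc]
      _ = (Wᴴ * W) * diagonal (fun i => (l i : ℂ)) * (Wᴴ * W) := by
          rw [hspec]; simp only [Matrix.mul_assoc]
      _ = _ := by rw [hW2]; simp
  let w : Fin d → EuclideanSpace ℂ (Fin d) := fun j => WithLp.toLp 2 (fun i => (T * W) i j)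
  have hw : ∀ i j, inner ℂ (w i) (w j) = if i = j then (l i : ℂ) else 0 := by
    intro i j
    have := congrFun (congrFun hG i) j
    rw [diagonal_apply] at this
    rw [← this]
    rw [mul_apply (M := (T * W)ᴴ)]
    simp only [conjTranspose_apply]
    simp [w, PiLp.inner_apply, mul_comm]
  let v : Fin d → EuclideanSpace ℂ (Fin d) := fun j => (((Real.sqrt (l j))⁻¹ : ℝ) : ℂ) • w j
  have hv : Orthonormal ℂ (Set.domRestrict {i | l i ≠ 0} v) := by
    rw [orthonormal_iff_ite]
    rintro ⟨i, hi⟩ ⟨j, hj⟩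
    simp only [Set.domRestrict_apply, v, inner_smul_left, inner_smul_right, hw, Subtype.mk.injEq]
    by_cases hij : i = j
    · subst hij
      simp only [if_true, Complex.conj_ofReal]
      norm_cast
      have h1 : 0 < Real.sqrt (l i) := Real.sqrt_pos.2 (lt_of_le_of_ne (hl0 i) (Ne.symm hi))
      have h2 := Real.sq_sqrt (hl0 i)
      field_simp
      exact h2.symm
    · simp [hij]
  obtain ⟨b, hb⟩ := hv.exists_orthonormalBasis_extension_of_card_eq (by simp)
  refine ⟨Matrix.of fun i j => b j i, W, ?_, hW2, ?_⟩
  · ext i j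
    have := orthonormal_iff_ite.1 b.orthonormal i j
    rw [one_apply, ← this]
    simp [PiLp.inner_apply, mul_apply, conjTranspose_apply, mul_comm]
  · ext i j
    rw [mul_diagonal]
    change w j i = b j i * _
    by_cases hj : l j = 0
    · have : w j = 0 := by
        rw [← inner_self_eq_zero (𝕜 := ℂ), hw]; simp [hj]
      rw [this, hj]; simp
    · rw [hb j hj]
      have h1 : Real.sqrt (l j) ≠ 0 := (Real.sqrt_pos.2 (lt_of_le_of_ne (hl0 j) (Ne.symm hj))).ne'
      have h2 : ((Real.sqrt (l j) : ℝ) : ℂ) ≠ 0 := by exact_mod_cast h1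
      simp only [v, PiLp.smul_apply, smul_eq_mul, Complex.ofReal_inv]
      field_simp

lemma bilin_le {d : ℕ} (X : Matrix (Fin d) (Fin d) ℂ) (x y : Fin d → ℂ) :
    ‖x ⬝ᵥ (X *ᵥ y)‖ ≤ opN X * Real.sqrt (∑ i, ‖x i‖ ^ 2) * Real.sqrt (∑ i, ‖y i‖ ^ 2) := by
  have h1 := norm_inner_le_norm (𝕜 := ℂ) (WithLp.toLp 2 (star x) : EuclideanSpace ℂ (Fin d))
    (WithLp.toLp 2 (X *ᵥ y))
  have h2 := (LinearMap.toContinuousLinearMap (Matrix.toEuclideanLin X)).le_opNorm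
    (WithLp.toLp 2 y)
  have h3 : (LinearMap.toContinuousLinearMap (Matrix.toEuclideanLin X)) (WithLp.toLp 2 y)
    = WithLp.toLp 2 (X *ᵥ y) := by simp [toLpLin_apply]
  rw [h3] at h2
  have h4 : inner ℂ (WithLp.toLp 2 (star x) : EuclideanSpace ℂ (Fin d)) (WithLp.toLp 2 (X *ᵥ y))
    = x ⬝ᵥ (X *ᵥ y) := by
    simp [PiLp.inner_apply, dotProduct, mul_comm]
  have h5 : ‖(WithLp.toLp 2 (star x) : EuclideanSpace ℂ (Fin d))‖ = Real.sqrt (∑ i, ‖x i‖ ^ 2) := by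
    simp [EuclideanSpace.norm_eq]
  have h6 : ‖(WithLp.toLp 2 y : EuclideanSpace ℂ (Fin d))‖ = Real.sqrt (∑ i, ‖y i‖ ^ 2) := by
    simp [EuclideanSpace.norm_eq]
  rw [h4, h5] at h1
  rw [h6] at h2
  calc _ ≤ _ := h1
    _ ≤ Real.sqrt (∑ i, ‖x i‖ ^ 2) * (opN X * Real.sqrt (∑ i, ‖y i‖ ^ 2)) :=
      mul_le_mul_of_nonneg_left h2 (Real.sqrt_nonneg _)
    _ = _ := by ring

lemma opN_one_le {d : ℕ} : opN (1 : Matrix (Fin d) (Fin d) ℂ) ≤ 1 := by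
  refine ContinuousLinearMap.opNorm_le_bound _ zero_le_one fun x => ?_
  simp

/-- Sum of `q`-th powers of column norms. -/
lemma col_le {d : ℕ} (B V : Matrix (Fin d) (Fin d) ℂ) (hV : Vᴴ * V = 1) {p : ℝ} (hp : 1 ≤ p) :
    ∑ i, (∑ k, ‖(B * V) k i‖ ^ 2) ^ p ≤
      ∑ i, ((posSemidef_conjTranspose_mul_self B).1.eigenvalues i) ^ p := by
  have h := diag_rpow_le (posSemidef_conjTranspose_mul_self (B * V)) hp
  have he : (posSemidef_conjTranspose_mul_self (B * V)).1.eigenvalues =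
      (posSemidef_conjTranspose_mul_self B).1.eigenvalues := by
    rw [IsHermitian.eigenvalues_eq_eigenvalues_iff]
    rw [conjTranspose_mul, Matrix.mul_assoc, charpoly_mul_comm, ← Matrix.mul_assoc, Matrix.mul_assoc,
      mul_eq_one_comm.1 hV, Matrix.mul_one]
  rw [he] at h
  refine le_of_eq_of_le (Finset.sum_congr rfl fun i _ => ?_) h
  congr 1
  have : ((B * V)ᴴ * (B * V)) i i = ((∑ k, ‖(B * V) k i‖ ^ 2 : ℝ) : ℂ) := by
    rw [mul_apply (M := (B * V)ᴴ)]
    simp only [conjTranspose_apply, RCLike.star_def, Complex.conj_mul']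
    push_cast; rfl
  rw [this, Complex.ofReal_re]

lemma row_le {d : ℕ} (A U : Matrix (Fin d) (Fin d) ℂ) (hU : Uᴴ * U = 1) {p : ℝ} (hp : 1 ≤ p) :
    ∑ i, (∑ k, ‖(Uᴴ * A) i k‖ ^ 2) ^ p ≤
      ∑ i, ((posSemidef_conjTranspose_mul_self A).1.eigenvalues i) ^ p := by
  have h := col_le Aᴴ U hU hp
  have he : (posSemidef_conjTranspose_mul_self Aᴴ).1.eigenvalues =
      (posSemidef_conjTranspose_mul_self A).1.eigenvalues := by
    rw [IsHermitian.eigenvalues_eq_eigenvalues_iff, conjTranspose_conjTranspose, charpoly_mul_comm]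
  rw [he] at h
  refine le_of_eq_of_le (Finset.sum_congr rfl fun i _ => ?_) h
  congr 1
  refine Finset.sum_congr rfl fun k _ => ?_
  have : (Aᴴ * U) k i = star ((Uᴴ * A) i k) := by
    rw [← conjTranspose_apply, conjTranspose_mul, conjTranspose_conjTranspose]
  rw [this, norm_star]

lemma sNorm_le {d : ℕ} (p : ℝ) (hp : 1 ≤ p) (A X B : Matrix (Fin d) (Fin d) ℂ) :
    sNorm p (A * X * B) ≤ sNorm (2 * p) A * opN X * sNorm (2 * p) B := by
  have hp0 : 0 < p := by linarith
  obtain ⟨U, V, hU, hV, hT⟩ := exists_svd (A * X * B)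
  set l := (posSemidef_conjTranspose_mul_self (A * X * B)).1.eigenvalues with hl
  have hl0 : ∀ i, 0 ≤ l i := (posSemidef_conjTranspose_mul_self (A * X * B)).eigenvalues_nonneg
  set a := (posSemidef_conjTranspose_mul_self A).1.eigenvalues with ha
  have ha0 : ∀ i, 0 ≤ a i := (posSemidef_conjTranspose_mul_self A).eigenvalues_nonneg
  set b := (posSemidef_conjTranspose_mul_self B).1.eigenvalues with hb
  have hb0 : ∀ i, 0 ≤ b i := (posSemidef_conjTranspose_mul_self B).eigenvalues_nonneg
  have hO : 0 ≤ opN X := norm_nonneg _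
  set r : Fin d → ℝ := fun i => ∑ k, ‖(Uᴴ * A) i k‖ ^ 2 with hr
  set c : Fin d → ℝ := fun i => ∑ k, ‖(B * V) k i‖ ^ 2 with hc
  have hr0 : ∀ i, 0 ≤ r i := fun i => Finset.sum_nonneg fun _ _ => by positivity
  have hc0 : ∀ i, 0 ≤ c i := fun i => Finset.sum_nonneg fun _ _ => by positivity
  have hs : ∀ i, Real.sqrt (l i) ≤ opN X * Real.sqrt (r i) * Real.sqrt (c i) := by
    intro i
    have h1 := bilin_le X (fun k => (Uᴴ * A) i k) (fun k => (B * V) k i)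
    have h2 : (fun k => (Uᴴ * A) i k) ⬝ᵥ (X *ᵥ (fun k => (B * V) k i)) =
        ((Uᴴ * A) * (X * (B * V))) i i := rfl
    have h3 : (Uᴴ * A) * (X * (B * V)) = diagonal (fun i => ((Real.sqrt (l i) : ℝ) : ℂ)) := by
      calc _ = Uᴴ * (A * X * B * V) := by simp only [Matrix.mul_assoc]
        _ = _ := by rw [hT, ← Matrix.mul_assoc, hU, Matrix.one_mul]
    rw [h2, h3, diagonal_apply_eq, Complex.norm_real, Real.norm_of_nonneg (Real.sqrt_nonneg _)] at h1
    exact h1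
  have hsum : ∑ i, l i ^ (p / 2) ≤
      opN X ^ p * (Real.sqrt (∑ i, a i ^ p) * Real.sqrt (∑ i, b i ^ p)) := by
    calc ∑ i, l i ^ (p / 2) ≤ ∑ i, opN X ^ p * (Real.sqrt (r i ^ p) * Real.sqrt (c i ^ p)) := by
          refine Finset.sum_le_sum fun i _ => ?_
          have e : ∀ x : ℝ, 0 ≤ x → Real.sqrt (x ^ p) = Real.sqrt x ^ p := by
            intro x hx
            rw [Real.sqrt_eq_rpow, Real.sqrt_eq_rpow, ← Real.rpow_mul hx, ← Real.rpow_mul hx, mul_comm]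
          have e2 : l i ^ (p / 2) = Real.sqrt (l i) ^ p := by
            rw [Real.sqrt_eq_rpow, ← Real.rpow_mul (hl0 i)]; congr 1; ring
          rw [e _ (hr0 i), e _ (hc0 i), e2, ← Real.mul_rpow (Real.sqrt_nonneg _) (Real.sqrt_nonneg _),
            ← Real.mul_rpow hO (by positivity), ← mul_assoc]
          exact Real.rpow_le_rpow (Real.sqrt_nonneg _) (hs i) hp0.le
      _ = opN X ^ p * ∑ i, Real.sqrt (r i ^ p) * Real.sqrt (c i ^ p) := by rw [Finset.mul_sum]
      _ ≤ opN X ^ p * (Real.sqrt (∑ i, r i ^ p) * Real.sqrt (∑ i, c i ^ p)) := by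
          refine mul_le_mul_of_nonneg_left ?_ (Real.rpow_nonneg hO _)
          exact Real.sum_sqrt_mul_sqrt_le _ (fun i => Real.rpow_nonneg (hr0 i) _)
            (fun i => Real.rpow_nonneg (hc0 i) _)
      _ ≤ _ := by
          refine mul_le_mul_of_nonneg_left ?_ (Real.rpow_nonneg hO _)
          exact mul_le_mul (Real.sqrt_le_sqrt (row_le A U hU hp)) (Real.sqrt_le_sqrt (col_le B V hV hp))
            (Real.sqrt_nonneg _) (Real.sqrt_nonneg _)
  have hA0 : 0 ≤ ∑ i, a i ^ p := Finset.sum_nonneg fun i _ => Real.rpow_nonneg (ha0 i) _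
  have hB0 : 0 ≤ ∑ i, b i ^ p := Finset.sum_nonneg fun i _ => Real.rpow_nonneg (hb0 i) _
  have hL0 : 0 ≤ ∑ i, l i ^ (p / 2) := Finset.sum_nonneg fun i _ => Real.rpow_nonneg (hl0 i) _
  have e : ∀ x : ℝ, 0 ≤ x → Real.sqrt x ^ (1 / p) = x ^ (1 / (2 * p)) := by
    intro x hx
    rw [Real.sqrt_eq_rpow, ← Real.rpow_mul hx]; congr 1; field_simp
  have h := Real.rpow_le_rpow hL0 hsum (by positivity : 0 ≤ 1 / p)
  rw [Real.mul_rpow (Real.rpow_nonneg hO _) (by positivity),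
    Real.mul_rpow (Real.sqrt_nonneg _) (Real.sqrt_nonneg _), e _ hA0, e _ hB0,
    ← Real.rpow_mul hO, mul_one_div_cancel hp0.ne', Real.rpow_one] at h
  unfold sNorm
  rw [← hl, ← ha, ← hb, show 2 * p / 2 = p by ring]
  calc _ ≤ _ := h
    _ = _ := by ring

lemma sNorm_nonneg' {d : ℕ} (p : ℝ) (T : Matrix (Fin d) (Fin d) ℂ) : 0 ≤ sNorm p T :=
  Real.rpow_nonneg (Finset.sum_nonneg fun i _ => Real.rpow_nonneg
    ((posSemidef_conjTranspose_mul_self T).eigenvalues_nonneg i) _) _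

lemma exists_factor {d : ℕ} (p : ℝ) (hp : 1 ≤ p) (T : Matrix (Fin d) (Fin d) ℂ) :
    ∃ A B : Matrix (Fin d) (Fin d) ℂ, T = A * 1 * B ∧
      sNorm (2 * p) A * sNorm (2 * p) B = sNorm p T := by
  have hp0 : 0 < p := by linarith
  obtain ⟨U, V, hU, hV, hT⟩ := exists_svd T
  set l := (posSemidef_conjTranspose_mul_self T).1.eigenvalues with hl
  have hl0 : ∀ i, 0 ≤ l i := (posSemidef_conjTranspose_mul_self T).eigenvalues_nonneg
  set D : Matrix (Fin d) (Fin d) ℂ :=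
    diagonal (fun i => ((Real.sqrt (Real.sqrt (l i)) : ℝ) : ℂ)) with hD
  have hDD : D * D = diagonal (fun i => ((Real.sqrt (l i) : ℝ) : ℂ)) := by
    rw [hD, diagonal_mul_diagonal]
    congr 1; ext i
    rw [← Complex.ofReal_mul, Real.mul_self_sqrt (Real.sqrt_nonneg _)]
  have hDs : Dᴴ = D := by
    rw [hD, diagonal_conjTranspose]
    congr 1; ext i; simp
  have key : ∀ M : Matrix (Fin d) (Fin d) ℂ, (Mᴴ * M).charpoly = (D * D).charpoly →
      sNorm (2 * p) M = (∑ i, l i ^ (p / 2)) ^ (1 / (2 * p)) := by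
    intro M hM
    unfold sNorm
    rw [hDD] at hM
    rw [sum_eig_of_charpoly (posSemidef_conjTranspose_mul_self M).1 _ hM (fun x => x ^ (2 * p / 2))]
    congr 1
    refine Finset.sum_congr rfl fun i _ => ?_
    rw [Real.sqrt_eq_rpow, ← Real.rpow_mul (hl0 i)]; congr 1; ring
  refine ⟨U * D, D * Vᴴ, ?_, ?_⟩
  · calc T = T * (V * Vᴴ) := by rw [mul_eq_one_comm.1 hV, Matrix.mul_one]
      _ = U * (D * D) * Vᴴ := by rw [← Matrix.mul_assoc, hT, hDD]
      _ = _ := by simp only [Matrix.mul_assoc, Matrix.one_mul]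
  · have hS : 0 ≤ ∑ i, l i ^ (p / 2) := Finset.sum_nonneg fun i _ => Real.rpow_nonneg (hl0 i) _
    rw [key, key]
    · rw [← Real.rpow_add_of_nonneg hS (by positivity) (by positivity)]
      unfold sNorm
      rw [← hl]; congr 1; field_simp; norm_num
    · rw [charpoly_mul_comm, conjTranspose_mul, hDs, conjTranspose_conjTranspose]
      rw [show D * Vᴴ * (V * D) = D * (Vᴴ * V) * D by simp only [Matrix.mul_assoc], hV, Matrix.mul_one]
    · rw [conjTranspose_mul, hDs,
        show D * Uᴴ * (U * D) = D * (Uᴴ * U) * D by simp only [Matrix.mul_assoc], hU, Matrix.mul_one]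

/-- scalar Pisier factorization formula: for `1 ≤ p < ∞`,
`inf { ‖A‖_{S_{2p}} ‖X‖_∞ ‖B‖_{S_{2p}} : T = A X B } = ‖T‖_{S_p}`. -/
theorem stmt4 {d : ℕ} (p : ℝ) (hp : 1 ≤ p) (T : Matrix (Fin d) (Fin d) ℂ) :
    sInf {c : ℝ | ∃ A X B : Matrix (Fin d) (Fin d) ℂ, T = A * X * B ∧
        c = sNorm (2 * p) A * opN X * sNorm (2 * p) B} = sNorm p T := by
  obtain ⟨A, B, hT, hAB⟩ := exists_factor p hp T
  have lower : ∀ c ∈ {c : ℝ | ∃ A X B : Matrix (Fin d) (Fin d) ℂ, T = A * X * B ∧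
        c = sNorm (2 * p) A * opN X * sNorm (2 * p) B}, sNorm p T ≤ c := by
    rintro c ⟨A, X, B, rfl, rfl⟩
    exact sNorm_le p hp A X B
  have hmem : sNorm (2 * p) A * opN (1 : Matrix (Fin d) (Fin d) ℂ) * sNorm (2 * p) B ∈
      {c : ℝ | ∃ A X B : Matrix (Fin d) (Fin d) ℂ, T = A * X * B ∧
        c = sNorm (2 * p) A * opN X * sNorm (2 * p) B} := ⟨A, 1, B, hT, rfl⟩
  refine le_antisymm ((csInf_le ⟨_, lower⟩ hmem).trans ?_) (le_csInf ⟨_, hmem⟩ lower)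
  rw [← hAB, mul_right_comm]
  exact mul_le_of_le_one_right (mul_nonneg (sNorm_nonneg' _ _) (sNorm_nonneg' _ _)) opN_one_le
end

section
/- Let 1 ≤ p ≤ q ≤ ∞ and 1/p = 1/q + 1/r. For a positive semidefinite operator X on ℂ^d ⊗ ℂ^{d'}, the infimum of ‖A‖_{S_{2r}}·‖Y‖_{S_q}·‖A*‖_{S_{2r}} over all factorizations X = (A ⊗ I) Y (A* ⊗ I) with A ∈ M_d(ℂ) positive definite equals the infimum over all factorizations X = (A ⊗ I) Y (B ⊗ I) with arbitrary A, B ∈ M_d(ℂ) of ‖A‖_{S_{2r}}·‖Y‖_{S_q}·‖B‖_{S_{2r}}. -/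
open scoped Kronecker ComplexOrder ENNReal
open Matrix

/-- Schatten norm with exponent in `ℝ≥0∞`, the exponent `p = ∞` giving the operator norm. -/
noncomputable def sNormE {n : Type*} [Fintype n] [DecidableEq n] (p : ℝ≥0∞)
    (M : Matrix n n ℂ) : ℝ :=
  if p = ⊤ then opN M else sNorm p.toReal M


namespace Stmt5Aux
open scoped Matrix.Norms.L2Operator

variable {n : Type*} [Fintype n] [DecidableEq n]

lemma opN_eq (M : Matrix n n ℂ) : opN M = ‖M‖ := rfl

lemma col_le (M : Matrix n n ℂ) (i : n) : ∑ k, ‖M k i‖ ^ 2 ≤ ‖M‖ ^ 2 := by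
  have h := Matrix.l2_opNorm_mulVec M (EuclideanSpace.single i (1 : ℂ))
  simp only [PiLp.norm_single, norm_one, mul_one] at h
  have h2 := pow_le_pow_left₀ (norm_nonneg _) h 2
  rw [EuclideanSpace.norm_sq_eq] at h2
  simpa using h2

lemma row_le (M : Matrix n n ℂ) (i : n) : ∑ k, ‖M i k‖ ^ 2 ≤ ‖M‖ ^ 2 := by
  have h := col_le Mᴴ i
  rw [Matrix.l2_opNorm_conjTranspose] at h
  simpa using h

lemma entry_le (M : Matrix n n ℂ) (i j : n) : ‖M i j‖ ≤ ‖M‖ := by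
  have h := row_le M i
  have h2 : ‖M i j‖ ^ 2 ≤ ∑ k, ‖M i k‖ ^ 2 :=
    Finset.single_le_sum (f := fun k => ‖M i k‖ ^ 2) (fun k _ => by positivity) (Finset.mem_univ j)
  exact (sq_le_sq₀ (norm_nonneg _) (norm_nonneg _)).1 (h2.trans h)

lemma norm_le_one_of_sum {M Q : Matrix n n ℂ} (h : Mᴴ * M + Qᴴ * Q = 1) : ‖M‖ ≤ 1 := by
  rw [Matrix.l2_opNorm_def]
  refine ContinuousLinearMap.opNorm_le_bound _ zero_le_one fun x => ?_
  rw [one_mul]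
  have key : ∀ A : Matrix n n ℂ, ∀ x : EuclideanSpace ℂ n,
      ((‖Matrix.toEuclideanLin A x‖ ^ 2 : ℝ) : ℂ) = star (x.ofLp) ⬝ᵥ ((Aᴴ * A) *ᵥ x.ofLp) := by
    intro A x
    rw [← Matrix.mulVec_mulVec, Matrix.dotProduct_mulVec, ← Matrix.star_mulVec,
      EuclideanSpace.norm_sq_eq]
    simp [dotProduct, Matrix.toLpLin_apply, Complex.conj_mul']
  have h1 := key M x
  have h2 := key Q x
  have h3 := key 1 x
  have h4 : ((‖Matrix.toEuclideanLin M x‖ ^ 2 + ‖Matrix.toEuclideanLin Q x‖ ^ 2 : ℝ) : ℂ)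
      = ((‖x‖ ^ 2 : ℝ) : ℂ) := by
    push_cast at h1 h2 h3 ⊢
    rw [h1, h2, ← dotProduct_add, ← Matrix.add_mulVec, h]
    simpa using h3.symm
  have h5 := Complex.ofReal_injective h4
  have : ‖Matrix.toEuclideanLin M x‖ ^ 2 ≤ ‖x‖ ^ 2 := by
    nlinarith [sq_nonneg ‖Matrix.toEuclideanLin Q x‖]
  exact (sq_le_sq₀ (norm_nonneg _) (norm_nonneg _)).1 this

lemma norm_le_one_of_isometry {M : Matrix n n ℂ} (h : Mᴴ * M = 1) : ‖M‖ ≤ 1 :=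
  norm_le_one_of_sum (Q := 0) (by simpa using h)

/-- spectral theorem in plain form -/
lemma spectral {H : Matrix n n ℂ} (hH : H.IsHermitian) :
    ∃ W : Matrix n n ℂ, Wᴴ * W = 1 ∧ W * Wᴴ = 1 ∧
      Wᴴ * H * W = diagonal (fun i => (hH.eigenvalues i : ℂ)) ∧
      H = W * diagonal (fun i => (hH.eigenvalues i : ℂ)) * Wᴴ := by
  refine ⟨hH.eigenvectorUnitary, ?_, ?_, ?_, ?_⟩
  · exact Unitary.coe_star_mul_self hH.eigenvectorUnitary
  · exact Unitary.coe_mul_star_self hH.eigenvectorUnitary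
  · have := hH.conjStarAlgAut_star_eigenvectorUnitary
    rw [Unitary.conjStarAlgAut_star_apply] at this
    exact this
  · have := hH.spectral_theorem
    rw [Unitary.conjStarAlgAut_apply] at this
    exact this

lemma sum_eig_congr {H K : Matrix n n ℂ} (hH : H.IsHermitian) (hK : K.IsHermitian)
    (h : H.charpoly = K.charpoly) (g : ℝ → ℝ) :
    ∑ i, g (hH.eigenvalues i) = ∑ i, g (hK.eigenvalues i) := by
  have := Matrix.IsHermitian.eigenvalues_eq_eigenvalues_iff hH hK |>.2 h
  rw [this]

lemma sum_eig_diag {H W : Matrix n n ℂ} (hH : H.IsHermitian) (f : n → ℝ)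
    (hW : Wᴴ * W = 1) (h : H = W * diagonal (fun i => (f i : ℂ)) * Wᴴ) (g : ℝ → ℝ) :
    ∑ i, g (hH.eigenvalues i) = ∑ i, g (f i) := by
  have h1 := hH.roots_charpoly_eq_eigenvalues
  have h2 : H.charpoly.roots = Multiset.map (fun i => (f i : ℂ)) Finset.univ.val := by
    rw [h, Matrix.charpoly_mul_comm, ← mul_assoc, hW, one_mul, Matrix.charpoly_diagonal,
      Polynomial.roots_prod]
    · simp
    · simp [Finset.prod_ne_zero_iff, Polynomial.X_sub_C_ne_zero]
  rw [h1] at h2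
  have h3 := congrArg (fun s => (Multiset.map (fun z : ℂ => g z.re) s).sum) h2
  simpa [Multiset.map_map, Function.comp_def] using h3

lemma svd (Y : Matrix n n ℂ) : ∃ U V : Matrix n n ℂ, ‖U‖ ≤ 1 ∧ ‖V‖ ≤ 1 ∧
    Y = U * diagonal (fun i =>
      ((Real.sqrt ((Matrix.posSemidef_conjTranspose_mul_self Y).1.eigenvalues i) : ℝ) : ℂ)) * V := by
  obtain ⟨W, hW1, hW2, hW3, -⟩ := spectral (Matrix.posSemidef_conjTranspose_mul_self Y).1
  have hnn := (Matrix.posSemidef_conjTranspose_mul_self Y).eigenvalues_nonneg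
  set l := (Matrix.posSemidef_conjTranspose_mul_self Y).1.eigenvalues
  have gen : ∀ f : n → ℝ, (Y * W * diagonal (fun i => (f i : ℂ)))ᴴ *
      (Y * W * diagonal (fun i => (f i : ℂ))) = diagonal (fun i => ((f i * l i * f i : ℝ) : ℂ)) := by
    intro f
    have e : (diagonal (fun i => (f i : ℂ)))ᴴ = diagonal (fun i => (f i : ℂ)) := by
      rw [diagonal_conjTranspose]; congr 1; ext i; simp
    rw [conjTranspose_mul, conjTranspose_mul, e]
    calc _ = diagonal (fun i => (f i : ℂ)) * (Wᴴ * (Yᴴ * Y) * W) * diagonal (fun i => (f i : ℂ)) := by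
          simp only [mul_assoc]
      _ = _ := by rw [hW3, diagonal_mul_diagonal, diagonal_mul_diagonal]; simp
  refine ⟨Y * W * diagonal (fun i => (((Real.sqrt (l i))⁻¹ : ℝ) : ℂ)), Wᴴ, ?_, ?_, ?_⟩
  · have h := Matrix.l2_opNorm_conjTranspose_mul_self
      (Y * W * diagonal (fun i => (((Real.sqrt (l i))⁻¹ : ℝ) : ℂ)))
    rw [gen, Matrix.l2_opNorm_diagonal] at h
    have h2 : ‖fun i => (((Real.sqrt (l i))⁻¹ * l i * (Real.sqrt (l i))⁻¹ : ℝ) : ℂ)‖ ≤ 1 := by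
      rw [pi_norm_le_iff_of_nonneg zero_le_one]
      intro i
      rw [Complex.norm_real]
      by_cases h0 : l i = 0
      · simp [h0]
      · have hp : 0 < Real.sqrt (l i) := Real.sqrt_pos.2 (lt_of_le_of_ne (hnn i) (Ne.symm h0))
        have : (Real.sqrt (l i))⁻¹ * l i * (Real.sqrt (l i))⁻¹ = 1 := by
          nth_rewrite 2 [← Real.mul_self_sqrt (hnn i)]
          field_simp
        rw [this]; simp
    rw [h] at h2
    nlinarith [norm_nonneg (Y * W * diagonal (fun i => (((Real.sqrt (l i))⁻¹ : ℝ) : ℂ)))]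
  · apply norm_le_one_of_isometry; simpa using hW2
  · have h0 : Y * W * diagonal (fun i => ((1 - (Real.sqrt (l i))⁻¹ * Real.sqrt (l i) : ℝ) : ℂ)) = 0 := by
      rw [← Matrix.conjTranspose_mul_self_eq_zero, gen]
      rw [← diagonal_zero]; congr 1; ext i
      by_cases h0 : l i = 0
      · simp [h0]
      · have hp : 0 < Real.sqrt (l i) := Real.sqrt_pos.2 (lt_of_le_of_ne (hnn i) (Ne.symm h0))
        rw [inv_mul_cancel₀ hp.ne']; simp
    have h1 : (1 : Matrix n n ℂ) - diagonal (fun i => (((Real.sqrt (l i))⁻¹ : ℝ) : ℂ)) *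
        diagonal (fun i => ((Real.sqrt (l i) : ℝ) : ℂ)) =
        diagonal (fun i => ((1 - (Real.sqrt (l i))⁻¹ * Real.sqrt (l i) : ℝ) : ℂ)) := by
      rw [diagonal_mul_diagonal, ← diagonal_one, diagonal_sub]; simp
    rw [← h1, mul_sub, mul_one, sub_eq_zero] at h0
    rw [mul_assoc (Y * W), ← h0, mul_assoc, hW2, mul_one]

/-- Jensen for sub-doubly-stochastic arrays -/
lemma jensen_sub {m : Type*} [Fintype m] (a : m → n → ℝ) (s : n → ℝ) (x : m → ℝ) {q : ℝ}
    (hq : 1 ≤ q) (ha : ∀ i k, 0 ≤ a i k) (hrow : ∀ i, ∑ k, a i k ≤ 1) (hcol : ∀ k, ∑ i, a i k ≤ 1)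
    (hs : ∀ k, 0 ≤ s k) (hx0 : ∀ i, 0 ≤ x i) (hx : ∀ i, x i ≤ ∑ k, a i k * s k) :
    ∑ i, x i ^ q ≤ ∑ k, s k ^ q := by
  have hq0 : 0 < q := by linarith
  calc ∑ i, x i ^ q ≤ ∑ i, ∑ k, a i k * s k ^ q := by
        refine Finset.sum_le_sum fun i _ => ?_
        have h := Real.inner_le_weight_mul_Lp_of_nonneg Finset.univ hq (a i) s (ha i) hs
        have hS : 0 ≤ ∑ k, a i k * s k ^ q :=
          Finset.sum_nonneg fun k _ => mul_nonneg (ha i k) (Real.rpow_nonneg (hs k) _)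
        have hw : (∑ k, a i k) ^ (1 - q⁻¹) ≤ 1 :=
          Real.rpow_le_one (Finset.sum_nonneg fun k _ => ha i k) (hrow i)
            (by have := inv_le_one_of_one_le₀ hq; linarith)
        have h2 : x i ≤ (∑ k, a i k * s k ^ q) ^ q⁻¹ :=
          (hx i).trans (h.trans (mul_le_of_le_one_left (Real.rpow_nonneg hS _) hw))
        calc x i ^ q ≤ ((∑ k, a i k * s k ^ q) ^ q⁻¹) ^ q :=
              Real.rpow_le_rpow (hx0 i) h2 hq0.le
          _ = _ := by rw [← Real.rpow_mul hS, inv_mul_cancel₀ hq0.ne', Real.rpow_one]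
    _ = ∑ k, (∑ i, a i k) * s k ^ q := by
        rw [Finset.sum_comm]; simp_rw [Finset.sum_mul]
    _ ≤ _ := by
        refine Finset.sum_le_sum fun k _ => ?_
        exact mul_le_of_le_one_left (Real.rpow_nonneg (hs k) _) (hcol k)

lemma pinch (Y F G : Matrix n n ℂ) (hF : ‖F‖ ≤ 1) (hG : ‖G‖ ≤ 1) {q : ℝ} (hq : 1 ≤ q) :
    ∑ i, ‖(F * Y * G) i i‖ ^ q ≤
      ∑ i, ((Matrix.posSemidef_conjTranspose_mul_self Y).1.eigenvalues i) ^ (q / 2) := by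
  obtain ⟨U, V, hU, hV, hY⟩ := svd Y
  have hnn := (Matrix.posSemidef_conjTranspose_mul_self Y).eigenvalues_nonneg
  set l := (Matrix.posSemidef_conjTranspose_mul_self Y).1.eigenvalues
  have e : ∀ i, l i ^ (q / 2) = (Real.sqrt (l i)) ^ q := fun i => by
    rw [Real.sqrt_eq_rpow, ← Real.rpow_mul (hnn i)]; congr 1; ring
  simp_rw [e]
  have hFU : ‖F * U‖ ≤ 1 := (norm_mul_le _ _).trans (mul_le_one₀ hF (norm_nonneg _) hU)
  have hVG : ‖V * G‖ ≤ 1 := (norm_mul_le _ _).trans (mul_le_one₀ hV (norm_nonneg _) hG)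
  have hFU2 : ‖F * U‖ ^ 2 ≤ 1 := pow_le_one₀ (norm_nonneg _) hFU
  have hVG2 : ‖V * G‖ ^ 2 ≤ 1 := pow_le_one₀ (norm_nonneg _) hVG
  refine jensen_sub (fun i k => (‖(F * U) i k‖ ^ 2 + ‖(V * G) k i‖ ^ 2) / 2) _ _ hq
    (fun i k => by positivity) (fun i => ?_) (fun k => ?_) (fun k => Real.sqrt_nonneg _)
    (fun i => norm_nonneg _) (fun i => ?_)
  · rw [← Finset.sum_div, Finset.sum_add_distrib]
    have := row_le (F * U) i
    have := col_le (V * G) i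
    linarith
  · rw [← Finset.sum_div, Finset.sum_add_distrib]
    have := col_le (F * U) k
    have := row_le (V * G) k
    linarith
  · have h1 : F * Y * G = (F * U) * diagonal (fun i => ((Real.sqrt (l i) : ℝ) : ℂ)) * (V * G) := by
      conv_lhs => rw [hY]
      simp only [mul_assoc]
    rw [h1, Matrix.mul_apply]
    refine (norm_sum_le _ _).trans (Finset.sum_le_sum fun k _ => ?_)
    rw [Matrix.mul_diagonal, norm_mul, norm_mul, Complex.norm_real, Real.norm_of_nonneg (Real.sqrt_nonneg _)]
    have := two_mul_le_add_sq ‖(F * U) i k‖ ‖(V * G) k i‖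
    have := Real.sqrt_nonneg (l k)
    nlinarith

lemma weyl_vec {E : Type*} [NormedAddCommGroup E] [InnerProductSpace ℂ E] {N : ℕ}
    (Z : E →ₗ[ℂ] E) (a : Fin N → E) (ha : LinearIndependent ℂ a) (lam : Fin N → ℂ)
    (hZ : ∀ i, Z (a i) = lam i • a i) :
    ∃ e : Fin N → E, Orthonormal ℂ e ∧ ∀ i, inner ℂ (e i) (Z (e i)) = lam i := by
  open InnerProductSpace in
  have ho := gramSchmidtNormed_orthonormal ha
  refine ⟨gramSchmidtNormed ℂ a, ho, fun i => ?_⟩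
  set S := Submodule.span ℂ (a '' Set.Iio i) with hS
  have hSg : Submodule.span ℂ (gramSchmidt ℂ a '' Set.Iio i) = S := span_gramSchmidt_Iio ℂ a i
  -- the operator preserves `S`
  have hpres : ∀ x ∈ S, Z x - lam i • x ∈ S := by
    intro x hx
    refine S.sub_mem ?_ (S.smul_mem _ hx)
    have : S ≤ S.comap Z := by
      rw [hS, Submodule.span_le]
      rintro _ ⟨j, hj, rfl⟩
      simp only [Submodule.comap_coe, Set.mem_preimage, hZ, SetLike.mem_coe]
      exact Submodule.smul_mem _ _ (Submodule.subset_span ⟨j, hj, rfl⟩)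
    exact this hx
  have horth : ∀ x ∈ S, inner ℂ (gramSchmidtNormed ℂ a i) x = 0 := by
    intro x hx
    rw [← hSg, ← span_gramSchmidtNormed] at hx
    have : Submodule.span ℂ (gramSchmidtNormed ℂ a '' Set.Iio i) ≤
        LinearMap.ker (innerₛₗ ℂ (gramSchmidtNormed ℂ a i)) := by
      rw [Submodule.span_le]
      rintro _ ⟨j, hj, rfl⟩
      simp only [SetLike.mem_coe, LinearMap.mem_ker, innerₛₗ_apply_apply]
      exact ho.2 (ne_of_gt hj)
    have h2 := this hx
    simpa using h2
  have hgs : gramSchmidt ℂ a i - a i ∈ S := by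
    rw [gramSchmidt_def, ← hSg, sub_sub_cancel_left]
    refine Submodule.neg_mem _ (Submodule.sum_mem _ fun j hj => ?_)
    rw [Submodule.starProjection_singleton]
    exact Submodule.smul_mem _ _ (Submodule.subset_span ⟨j, by simpa using hj, rfl⟩)
  have h1 : Z (gramSchmidt ℂ a i) - lam i • gramSchmidt ℂ a i ∈ S := by
    have := hpres _ hgs
    rw [map_sub, hZ, smul_sub] at this
    simpa using this
  have h2 : Z (gramSchmidtNormed ℂ a i) - lam i • gramSchmidtNormed ℂ a i ∈ S := by
    unfold gramSchmidtNormed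
    rw [map_smul, smul_comm, ← smul_sub]
    exact S.smul_mem _ h1
  have h3 := horth _ h2
  rw [inner_sub_right, inner_smul_right, inner_self_eq_norm_sq_to_K, ho.1 i, sub_eq_zero] at h3
  simpa using h3

lemma weyl_mat {Y' Z T T' : Matrix n n ℂ} (hY : Y'.IsHermitian) (hT : T' * T = 1)
    (h : Y' = T * Z * T') :
    ∃ E : Matrix n n ℂ, Eᴴ * E = 1 ∧ ∀ i, (Eᴴ * Z * E) i i = (hY.eigenvalues i : ℂ) := by
  have hT2 : T * T' = 1 := mul_eq_one_comm.1 hT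
  obtain ⟨W, hW1, hW2, -, hW4⟩ := spectral hY
  set M := T' * W with hM
  have hMi : (Wᴴ * T) * M = 1 := by
    rw [hM, mul_assoc, ← mul_assoc T, hT2, one_mul, hW1]
  have hZM : Z * M = M * diagonal (fun i => (hY.eigenvalues i : ℂ)) := by
    have : Z = T' * Y' * T := by
      rw [h]; simp only [mul_assoc]; rw [hT, mul_one, ← mul_assoc, hT, one_mul]
    rw [this, hM]
    calc T' * Y' * T * (T' * W) = T' * Y' * (T * T') * W := by simp only [mul_assoc]
      _ = T' * (Y' * W) := by rw [hT2, mul_one, mul_assoc]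
      _ = _ := by
        have hYW : Y' * W = W * diagonal (fun i => (hY.eigenvalues i : ℂ)) := by
          conv_lhs => rw [hW4, mul_assoc, hW1, mul_one]
        rw [hYW, mul_assoc]
  let σ := Fintype.equivFin n
  let a : Fin (Fintype.card n) → EuclideanSpace ℂ n := fun j => WithLp.toLp 2 (M.col (σ.symm j))
  have hli : LinearIndependent ℂ a := by
    have h1 : LinearIndependent ℂ M.col := by
      rw [Matrix.linearIndependent_cols_iff_isUnit]
      exact IsUnit.of_mul_eq_one_right _ hMi
    have h2 := (h1.comp σ.symm σ.symm.injective).map' (WithLp.linearEquiv 2 ℂ (n → ℂ)).symm.toLinearMap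
      (LinearEquiv.ker _)
    exact h2
  obtain ⟨e, he, hl⟩ := weyl_vec (Matrix.toEuclideanLin Z) a hli
    (fun j => (hY.eigenvalues (σ.symm j) : ℂ)) (by
      intro j
      ext k
      have := congrFun (congrFun hZM k) (σ.symm j)
      rw [Matrix.mul_diagonal] at this
      simp only [a, Matrix.toLpLin_apply, PiLp.smul_apply, smul_eq_mul]
      rw [mul_comm]
      exact this)
  refine ⟨Matrix.of fun k i => e (σ i) k, ?_, ?_⟩
  · ext i j
    have := orthonormal_iff_ite.1 he (σ i) (σ j)
    rw [Matrix.mul_apply, Matrix.one_apply]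
    simp only [PiLp.inner_apply, RCLike.inner_apply, EmbeddingLike.apply_eq_iff_eq] at this
    simp only [conjTranspose_apply, of_apply]
    rw [← this]
    exact Finset.sum_congr rfl fun k _ => mul_comm _ _
  · intro i
    have := hl (σ i)
    simp only [Equiv.symm_apply_apply] at this
    rw [← this, mul_assoc, Matrix.mul_apply]
    simp only [PiLp.inner_apply, RCLike.inner_apply]
    refine Finset.sum_congr rfl fun k _ => ?_
    rw [mul_comm]
    rfl

lemma schatten_le {q : ℝ≥0∞} (hq : 1 ≤ q) {Y Y' F G T T' : Matrix n n ℂ} (hY' : Y'.IsHermitian)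
    (hF : ‖F‖ ≤ 1) (hG : ‖G‖ ≤ 1) (hT : T' * T = 1) (h : Y' = T * (F * Y * G) * T') :
    sNormE q Y' ≤ sNormE q Y := by
  obtain ⟨E, hE, hdiag⟩ := weyl_mat hY' hT h
  have hEn : ‖E‖ ≤ 1 := norm_le_one_of_isometry hE
  have hEn' : ‖Eᴴ‖ ≤ 1 := by rw [Matrix.l2_opNorm_conjTranspose]; exact hEn
  have hF' : ‖Eᴴ * F‖ ≤ 1 := (norm_mul_le _ _).trans (mul_le_one₀ hEn' (norm_nonneg _) hF)
  have hG' : ‖G * E‖ ≤ 1 := (norm_mul_le _ _).trans (mul_le_one₀ hG (norm_nonneg _) hEn)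
  have hd : ∀ i, ((Eᴴ * F) * Y * (G * E)) i i = (hY'.eigenvalues i : ℂ) := by
    intro i; rw [← hdiag]; simp only [mul_assoc]
  obtain ⟨W, hW1, hW2, -, hW4⟩ := spectral hY'
  unfold sNormE
  split_ifs with hq'
  · rw [opN_eq, opN_eq]
    have hWn : ‖W‖ ≤ 1 := norm_le_one_of_isometry hW1
    have hWn' : ‖Wᴴ‖ ≤ 1 := by rw [Matrix.l2_opNorm_conjTranspose]; exact hWn
    have hD : ‖diagonal (fun i => (hY'.eigenvalues i : ℂ))‖ ≤ ‖Y‖ := by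
      rw [Matrix.l2_opNorm_diagonal, pi_norm_le_iff_of_nonneg (norm_nonneg _)]
      intro i
      rw [← hd]
      refine (entry_le _ _ _).trans ?_
      refine (norm_mul_le _ _).trans (le_trans (mul_le_of_le_one_right (norm_nonneg _) hG') ?_)
      exact (norm_mul_le _ _).trans (mul_le_of_le_one_left (norm_nonneg _) hF')
    calc ‖Y'‖ = ‖W * diagonal (fun i => (hY'.eigenvalues i : ℂ)) * Wᴴ‖ := by rw [← hW4]
      _ ≤ ‖W * diagonal (fun i => (hY'.eigenvalues i : ℂ))‖ * ‖Wᴴ‖ := norm_mul_le _ _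
      _ ≤ ‖W * diagonal (fun i => (hY'.eigenvalues i : ℂ))‖ :=
        mul_le_of_le_one_right (norm_nonneg _) hWn'
      _ ≤ ‖W‖ * ‖diagonal (fun i => (hY'.eigenvalues i : ℂ))‖ := norm_mul_le _ _
      _ ≤ ‖diagonal (fun i => (hY'.eigenvalues i : ℂ))‖ :=
        mul_le_of_le_one_left (norm_nonneg _) hWn
      _ ≤ _ := hD
  · have hq1 : 1 ≤ q.toReal := by
      have := ENNReal.toReal_mono hq' hq
      simpa using this
    have key := pinch Y (Eᴴ * F) (G * E) hF' hG' hq1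
    unfold sNorm
    refine Real.rpow_le_rpow ?_ (le_trans (le_of_eq ?_) key) (by positivity)
    · exact Finset.sum_nonneg fun i _ =>
        Real.rpow_nonneg ((Matrix.posSemidef_conjTranspose_mul_self Y').eigenvalues_nonneg i) _
    · have hsq : Y'ᴴ * Y' = W * diagonal (fun i => ((hY'.eigenvalues i ^ 2 : ℝ) : ℂ)) * Wᴴ := by
        rw [hY'.eq]
        conv_lhs => rw [hW4]
        calc _ = W * diagonal (fun i => (hY'.eigenvalues i : ℂ)) * (Wᴴ * W) *
              diagonal (fun i => (hY'.eigenvalues i : ℂ)) * Wᴴ := by simp only [mul_assoc]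
          _ = _ := by
            rw [hW1, mul_one, mul_assoc W, diagonal_mul_diagonal]
            simp [pow_two]
      rw [sum_eig_diag _ _ hW1 hsq (fun x => x ^ (q.toReal / 2))]
      refine Finset.sum_congr rfl fun i _ => ?_
      rw [hd, Complex.norm_real, Real.norm_eq_abs, ← sq_abs, ← Real.rpow_natCast,
        ← Real.rpow_mul (abs_nonneg _)]
      congr 1
      push_cast; ring

/-- regularised Schatten norm -/
noncomputable def phi (r : ℝ≥0∞) (M : Matrix n n ℂ) (ε : ℝ) : ℝ :=
  if r = ⊤ then Real.sqrt (‖M‖ ^ 2 + ε) else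
    (∑ i, ((Matrix.posSemidef_conjTranspose_mul_self M).1.eigenvalues i + ε) ^ r.toReal) ^
      (1 / (2 * r.toReal))

lemma phi_conjTranspose (r : ℝ≥0∞) (M : Matrix n n ℂ) (ε : ℝ) : phi r Mᴴ ε = phi r M ε := by
  unfold phi
  rw [Matrix.l2_opNorm_conjTranspose]
  congr 2
  refine sum_eig_congr _ _ ?_ (fun x => (x + ε) ^ r.toReal)
  rw [Matrix.charpoly_mul_comm, conjTranspose_conjTranspose]

lemma phi_zero (r : ℝ≥0∞) (M : Matrix n n ℂ) : phi r M 0 = sNormE (2 * r) M := by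
  unfold phi sNormE sNorm
  by_cases hr : r = ⊤
  · subst hr
    simp [ENNReal.mul_top, opN_eq, Real.sqrt_sq]
  · rw [if_neg hr, if_neg (ENNReal.mul_ne_top (by simp) hr)]
    simp

lemma phi_cont {r : ℝ≥0∞} (hr : 1 ≤ r) (M : Matrix n n ℂ) : Continuous (phi r M) := by
  unfold phi
  by_cases h : r = ⊤
  · simp only [h, if_true]
    fun_prop
  · simp only [h, if_false]
    have h1 : 1 ≤ r.toReal := by simpa using ENNReal.toReal_mono h hr
    refine Continuous.rpow_const ?_ fun _ => Or.inr (by positivity)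
    refine continuous_finsetSum _ fun i _ => ?_
    exact Continuous.rpow_const (by fun_prop) fun _ => Or.inr (by positivity)

lemma diag_sq (M : Matrix n n ℂ) (i : n) : (Mᴴ * M) i i = ((∑ k, ‖M k i‖ ^ 2 : ℝ) : ℂ) := by
  rw [Matrix.mul_apply]
  push_cast
  refine Finset.sum_congr rfl fun k _ => ?_
  rw [conjTranspose_apply, Complex.star_def, Complex.conj_mul']

lemma jensen_col (M W : Matrix n n ℂ) (hW1 : Wᴴ * W = 1) (hW2 : W * Wᴴ = 1) {ε r : ℝ}
    (hε : 0 ≤ ε) (hr : 1 ≤ r) :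
    ∑ i, (∑ k, ‖(M * W) k i‖ ^ 2 + ε) ^ r ≤
      ∑ i, ((Matrix.posSemidef_conjTranspose_mul_self M).1.eigenvalues i + ε) ^ r := by
  obtain ⟨V, hV1, hV2, -, hV4⟩ := spectral (Matrix.posSemidef_conjTranspose_mul_self M).1
  have hnn := (Matrix.posSemidef_conjTranspose_mul_self M).eigenvalues_nonneg
  set l := (Matrix.posSemidef_conjTranspose_mul_self M).1.eigenvalues
  have hS1 : (Vᴴ * W)ᴴ * (Vᴴ * W) = 1 := by
    rw [conjTranspose_mul, conjTranspose_conjTranspose, mul_assoc, ← mul_assoc V, hV2, one_mul, hW1]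
  have hSn : ‖Vᴴ * W‖ ^ 2 ≤ 1 := pow_le_one₀ (norm_nonneg _) (norm_le_one_of_isometry hS1)
  have hcol : ∀ i, ∑ k, ‖(Vᴴ * W) k i‖ ^ 2 = 1 := by
    intro i
    have := diag_sq (Vᴴ * W) i
    rw [hS1, Matrix.one_apply_eq] at this
    exact_mod_cast this.symm
  have hval : ∀ i, ∑ k, ‖(M * W) k i‖ ^ 2 = ∑ k, ‖(Vᴴ * W) k i‖ ^ 2 * l k := by
    intro i
    have h1 := diag_sq (M * W) i
    have h2 : (M * W)ᴴ * (M * W) = (Vᴴ * W)ᴴ * (diagonal (fun i => (l i : ℂ)) * (Vᴴ * W)) := by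
      rw [conjTranspose_mul, mul_assoc, ← mul_assoc Mᴴ, hV4]
      simp only [conjTranspose_mul, conjTranspose_conjTranspose, mul_assoc]
    rw [h2, Matrix.mul_apply] at h1
    apply Complex.ofReal_injective
    rw [← h1]
    push_cast
    refine Finset.sum_congr rfl fun k _ => ?_
    rw [Matrix.diagonal_mul, conjTranspose_apply, ← Complex.conj_mul', Complex.star_def]
    ring
  refine jensen_sub (fun i k => ‖(Vᴴ * W) k i‖ ^ 2) (fun k => l k + ε) _ hr
    (fun i k => by positivity) (fun i => (hcol i).le) (fun k => (row_le _ k).trans hSn)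
    (fun k => add_nonneg (hnn k) hε) (fun i => by positivity) (fun i => ?_)
  simp_rw [mul_add, Finset.sum_add_distrib, ← Finset.sum_mul, hcol, hval]
  simp

lemma c_bound {r : ℝ≥0∞} (hr : 1 ≤ r) {A B A' B' V C : Matrix n n ℂ} {ε : ℝ} (hε : 0 ≤ ε)
    (hA : A'ᴴ * A' = A * Aᴴ + (ε : ℂ) • (1 : Matrix n n ℂ))
    (hB : B'ᴴ * B' = Bᴴ * B + (ε : ℂ) • (1 : Matrix n n ℂ)) (hV : Vᴴ * V = 1)
    (hC : Cᴴ * C = A'ᴴ * V * B') :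
    sNormE (2 * r) C ^ 2 ≤ phi r A ε * phi r B ε := by
  rw [← phi_conjTranspose r A]
  obtain ⟨W, hW1, hW2, hW3, hW4⟩ := spectral (Matrix.posSemidef_conjTranspose_mul_self C).1
  have hnn := (Matrix.posSemidef_conjTranspose_mul_self C).eigenvalues_nonneg
  have hcol : ∀ M N : Matrix n n ℂ, Nᴴ * N = Mᴴ * M + (ε : ℂ) • (1 : Matrix n n ℂ) → ∀ i,
      ∑ k, ‖(N * W) k i‖ ^ 2 = ∑ k, ‖(M * W) k i‖ ^ 2 + ε := by
    intro M N h i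
    have h1 := diag_sq (N * W) i
    have h2 := diag_sq (M * W) i
    have h3 : (N * W)ᴴ * (N * W) = (M * W)ᴴ * (M * W) + (ε : ℂ) • (1 : Matrix n n ℂ) := by
      rw [conjTranspose_mul, mul_assoc, ← mul_assoc Nᴴ, h, add_mul, mul_add]
      rw [smul_mul_assoc, one_mul, mul_smul_comm, hW1]
      simp only [conjTranspose_mul, mul_assoc]
    rw [h3, Matrix.add_apply, h2, Matrix.smul_apply, Matrix.one_apply_eq] at h1
    apply Complex.ofReal_injective
    rw [← h1]; simp
  have hmu : ∀ i, (Matrix.posSemidef_conjTranspose_mul_self C).1.eigenvalues i ≤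
      Real.sqrt (∑ k, ‖(Aᴴ * W) k i‖ ^ 2 + ε) * Real.sqrt (∑ k, ‖(B * W) k i‖ ^ 2 + ε) := by
    intro i
    have h1 : (((A' * W)ᴴ * (V * (B' * W))) i i) =
        ((Matrix.posSemidef_conjTranspose_mul_self C).1.eigenvalues i : ℂ) := by
      have := congrFun (congrFun hW3 i) i
      rw [diagonal_apply_eq] at this
      rw [← this, hC]
      simp only [conjTranspose_mul, mul_assoc]
    have h2 : ∑ k, ‖(V * (B' * W)) k i‖ ^ 2 = ∑ k, ‖(B' * W) k i‖ ^ 2 := by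
      have e1 := diag_sq (V * (B' * W)) i
      have e2 := diag_sq (B' * W) i
      rw [conjTranspose_mul V, mul_assoc, ← mul_assoc Vᴴ, hV, one_mul, e2] at e1
      exact (Complex.ofReal_injective e1).symm
    rw [← hcol Aᴴ A' (by simpa using hA), ← hcol B B' hB, ← h2]
    have h3 := congrArg norm h1
    rw [Complex.norm_real, Real.norm_of_nonneg (hnn i)] at h3
    rw [← h3, Matrix.mul_apply]
    refine (norm_sum_le _ _).trans ?_
    refine le_trans (le_of_eq ?_) (Real.sum_mul_le_sqrt_mul_sqrt Finset.univ
      (fun k => ‖(A' * W) k i‖) (fun k => ‖(V * (B' * W)) k i‖))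
    refine Finset.sum_congr rfl fun k _ => ?_
    rw [norm_mul, conjTranspose_apply, norm_star]
  have hxa : ∀ i, 0 ≤ ∑ k, ‖(Aᴴ * W) k i‖ ^ 2 + ε := fun i => by positivity
  have hxb : ∀ i, 0 ≤ ∑ k, ‖(B * W) k i‖ ^ 2 + ε := fun i => by positivity
  by_cases h : r = ⊤
  · subst h
    rw [← phi_zero]
    unfold phi
    simp only [if_true]
    rw [add_zero, Real.sqrt_sq (norm_nonneg _), pow_two, ← Matrix.l2_opNorm_conjTranspose_mul_self]
    have hWn : ‖W‖ ≤ 1 := norm_le_one_of_isometry hW1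
    have hWn' : ‖Wᴴ‖ ≤ 1 := by rw [Matrix.l2_opNorm_conjTranspose]; exact hWn
    have hcn : ∀ (M : Matrix n n ℂ) i, ∑ k, ‖(M * W) k i‖ ^ 2 ≤ ‖M‖ ^ 2 := fun M i =>
      (col_le _ _).trans (pow_le_pow_left₀ (norm_nonneg _)
        ((norm_mul_le _ _).trans (mul_le_of_le_one_right (norm_nonneg _) hWn)) 2)
    set l := (Matrix.posSemidef_conjTranspose_mul_self C).1.eigenvalues
    rw [hW4]
    refine (norm_mul_le _ _).trans ((mul_le_of_le_one_right (norm_nonneg _) hWn').trans ?_)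
    refine (norm_mul_le _ _).trans ((mul_le_of_le_one_left (norm_nonneg _) hWn).trans ?_)
    rw [Matrix.l2_opNorm_diagonal, pi_norm_le_iff_of_nonneg (by positivity)]
    intro i
    rw [Complex.norm_real, Real.norm_of_nonneg (hnn i)]
    refine (hmu i).trans ?_
    gcongr
    · exact hcn _ i
    · exact hcn _ i
  · have h1 : 1 ≤ r.toReal := by simpa using ENNReal.toReal_mono h hr
    have hJa := jensen_col Aᴴ W hW1 hW2 hε h1
    have hJb := jensen_col B W hW1 hW2 hε h1
    rw [← phi_zero]
    unfold phi
    simp only [h, if_false, add_zero]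
    set s := r.toReal
    have hs : 0 < s := by linarith
    set Sa := ∑ i, ((Matrix.posSemidef_conjTranspose_mul_self Aᴴ).1.eigenvalues i + ε) ^ s
    set Sb := ∑ i, ((Matrix.posSemidef_conjTranspose_mul_self B).1.eigenvalues i + ε) ^ s
    set l := (Matrix.posSemidef_conjTranspose_mul_self C).1.eigenvalues
    have hSl : 0 ≤ ∑ i, l i ^ s := Finset.sum_nonneg fun i _ => Real.rpow_nonneg (hnn i) _
    have hSa0 : 0 ≤ Sa := le_trans (Finset.sum_nonneg fun i _ => Real.rpow_nonneg (hxa i) _) hJa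
    have hSb0 : 0 ≤ Sb := le_trans (Finset.sum_nonneg fun i _ => Real.rpow_nonneg (hxb i) _) hJb
    have hsum : ∑ i, l i ^ s ≤ Real.sqrt Sa * Real.sqrt Sb := by
      calc ∑ i, l i ^ s ≤ ∑ i, Real.sqrt (∑ k, ‖(Aᴴ * W) k i‖ ^ 2 + ε) ^ s *
            Real.sqrt (∑ k, ‖(B * W) k i‖ ^ 2 + ε) ^ s := by
            refine Finset.sum_le_sum fun i _ => ?_
            rw [← Real.mul_rpow (Real.sqrt_nonneg _) (Real.sqrt_nonneg _)]
            exact Real.rpow_le_rpow (hnn i) (hmu i) hs.le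
        _ ≤ _ := Real.sum_mul_le_sqrt_mul_sqrt Finset.univ _ _
        _ ≤ _ := by
            have hsw : ∀ x : ℝ, 0 ≤ x → (Real.sqrt x ^ s) ^ 2 = x ^ s := fun x hx => by
              rw [← Real.rpow_natCast, ← Real.rpow_mul (Real.sqrt_nonneg _), mul_comm,
                Real.rpow_mul (Real.sqrt_nonneg _)]
              congr 1
              rw [Real.rpow_natCast, Real.sq_sqrt hx]
            simp_rw [fun i => hsw _ (hxa i), fun i => hsw _ (hxb i)]
            gcongr
    rw [← Real.rpow_natCast, ← Real.rpow_mul hSl, ← Real.mul_rpow hSa0 hSb0]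
    calc _ ≤ (Real.sqrt Sa * Real.sqrt Sb) ^ (1 / (2 * s) * (2 : ℕ)) :=
          Real.rpow_le_rpow hSl hsum (by positivity)
      _ = _ := by
          rw [← Real.sqrt_mul hSa0, Real.sqrt_eq_rpow, ← Real.rpow_mul (mul_nonneg hSa0 hSb0)]
          congr 1
          push_cast; ring

lemma exists_sqrt {P : Matrix n n ℂ} (hP : P.PosDef) :
    ∃ C : Matrix n n ℂ, C.PosDef ∧ C * C = P := by
  obtain ⟨W, hW1, hW2, -, hW4⟩ := spectral hP.1
  have hpos := hP.eigenvalues_pos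
  refine ⟨W * diagonal (fun i => ((Real.sqrt (hP.1.eigenvalues i) : ℝ) : ℂ)) * Wᴴ, ?_, ?_⟩
  · refine Matrix.PosDef.mul_mul_conjTranspose_same (Matrix.PosDef.diagonal fun i => ?_) ?_
    · have := Real.sqrt_pos.2 (hpos i)
      exact_mod_cast this
    · intro x y h
      have h2 := congrArg (fun v => v ᵥ* Wᴴ) h
      simpa [Matrix.vecMul_vecMul, hW2] using h2
  · conv_rhs => rw [hW4]
    calc _ = W * diagonal (fun i => ((Real.sqrt (hP.1.eigenvalues i) : ℝ) : ℂ)) * (Wᴴ * W) *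
          diagonal (fun i => ((Real.sqrt (hP.1.eigenvalues i) : ℝ) : ℂ)) * Wᴴ := by
            simp only [mul_assoc]
      _ = _ := by
        rw [hW1, mul_one, mul_assoc W, diagonal_mul_diagonal]
        congr 3
        ext i
        rw [← Complex.ofReal_mul, Real.mul_self_sqrt (hpos i).le]

lemma exists_reg (M : Matrix n n ℂ) {ε : ℝ} (hε : 0 < ε) :
    ∃ A' Ai : Matrix n n ℂ, A'.IsHermitian ∧ Ai.IsHermitian ∧ Ai * A' = 1 ∧ A' * Ai = 1 ∧
      A' * A' = Mᴴ * M + (ε : ℂ) • (1 : Matrix n n ℂ) ∧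
      (M * Ai)ᴴ * (M * Ai) + ((Real.sqrt ε : ℂ) • Ai)ᴴ * ((Real.sqrt ε : ℂ) • Ai) = 1 := by
  have hP : (Mᴴ * M + (ε : ℂ) • (1 : Matrix n n ℂ)).PosDef := by
    refine Matrix.PosDef.posSemidef_add (Matrix.posSemidef_conjTranspose_mul_self M) ?_
    exact Matrix.PosDef.one.smul (by exact_mod_cast hε)
  obtain ⟨C, hC, hCC⟩ := exists_sqrt hP
  have hu : IsUnit C.det := (Matrix.isUnit_iff_isUnit_det _).1 hC.isUnit
  have e1 : C⁻¹ * C = 1 := Matrix.nonsing_inv_mul _ hu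
  have e2 : C * C⁻¹ = 1 := Matrix.mul_nonsing_inv _ hu
  have hCi : (C⁻¹)ᴴ = C⁻¹ := hC.inv.1.eq
  refine ⟨C, C⁻¹, hC.1, hC.inv.1, e1, e2, hCC, ?_⟩
  have hs : (Real.sqrt ε : ℂ) * (Real.sqrt ε : ℂ) = (ε : ℂ) := by
    rw [← Complex.ofReal_mul, Real.mul_self_sqrt hε.le]
  rw [conjTranspose_mul, conjTranspose_smul, hCi, Complex.star_def, Complex.conj_ofReal,
    smul_mul_smul_comm, hs]
  calc _ = C⁻¹ * (Mᴴ * M + (ε : ℂ) • (1 : Matrix n n ℂ)) * C⁻¹ := by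
        rw [mul_add, add_mul, mul_smul_comm, mul_one, smul_mul_assoc]
        simp only [mul_assoc]
    _ = 1 := by rw [← hCC, ← mul_assoc, e1, one_mul, e2]

lemma kron_contr {m : Type*} [Fintype m] [DecidableEq m] {K Q : Matrix n n ℂ}
    (h : Kᴴ * K + Qᴴ * Q = 1) : ‖K ⊗ₖ (1 : Matrix m m ℂ)‖ ≤ 1 := by
  apply norm_le_one_of_sum (Q := Q ⊗ₖ (1 : Matrix m m ℂ))
  simp only [conjTranspose_kronecker, conjTranspose_one, ← mul_kronecker_mul, mul_one]
  rw [← add_kronecker, h, one_kronecker_one]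

lemma main_eps {d d' : ℕ} (q r : ℝ≥0∞) (hq : 1 ≤ q) (hr : 1 ≤ r)
    (X : Matrix (Fin d × Fin d') (Fin d × Fin d') ℂ) (hX : X.PosSemidef)
    (A B : Matrix (Fin d) (Fin d) ℂ) (Y : Matrix (Fin d × Fin d') (Fin d × Fin d') ℂ)
    (h : X = (A ⊗ₖ (1 : Matrix (Fin d') (Fin d') ℂ)) * Y * (B ⊗ₖ 1)) {ε : ℝ} (hε : 0 < ε) :
    ∃ (C : Matrix (Fin d) (Fin d) ℂ) (Y' : Matrix (Fin d × Fin d') (Fin d × Fin d') ℂ),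
      C.PosDef ∧ X = (C ⊗ₖ (1 : Matrix (Fin d') (Fin d') ℂ)) * Y' * (Cᴴ ⊗ₖ 1) ∧
      sNormE (2 * r) C ^ 2 ≤ phi r A ε * phi r B ε ∧ sNormE q Y' ≤ sNormE q Y := by
  obtain ⟨A', Ai, hA'h, hAih, hA1, hA2, hAA, hAK⟩ := exists_reg Aᴴ hε
  obtain ⟨B', Bi, hB'h, hBih, hB1, hB2, hBB, hBK⟩ := exists_reg B hε
  -- polar decomposition of `B' * Ai`
  have hM : (B' * Ai) * (A' * Bi) = 1 := by
    rw [mul_assoc, ← mul_assoc Ai, hA1, one_mul, hB2]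
  have hM' : (A' * Bi) * (B' * Ai) = 1 := mul_eq_one_comm.1 hM
  have hPd : ((B' * Ai)ᴴ * (B' * Ai)).PosDef := by
    refine Matrix.PosDef.conjTranspose_mul_self _ ?_
    intro x y hxy
    have h2 := congrArg (fun v => (A' * Bi) *ᵥ v) hxy
    simpa [Matrix.mulVec_mulVec, hM'] using h2
  obtain ⟨R, hR, hRR⟩ := exists_sqrt hPd
  set V := R * (A' * Bi) with hVdef
  have hV1 : Vᴴ * V = 1 := by
    rw [hVdef, conjTranspose_mul, hR.1.eq]
    calc _ = (A' * Bi)ᴴ * (R * R) * (A' * Bi) := by simp only [mul_assoc]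
      _ = ((B' * Ai) * (A' * Bi))ᴴ * ((B' * Ai) * (A' * Bi)) := by
        rw [hRR, conjTranspose_mul (B' * Ai)]; simp only [mul_assoc]
      _ = 1 := by rw [hM]; simp
  have hV2 : V * Vᴴ = 1 := mul_eq_one_comm.1 hV1
  have hD : (A' * R * A').PosDef := by
    have := Matrix.PosDef.mul_mul_conjTranspose_same (B := A') hR (by
      intro x y hxy
      have h2 := congrArg (fun v => v ᵥ* Ai) hxy
      simpa [Matrix.vecMul_vecMul, hA2] using h2)
    rwa [hA'h.eq] at this
  obtain ⟨C, hC, hCC⟩ := exists_sqrt hD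
  have hCV : C * C = A' * V * B' := by
    rw [hCC, hVdef]
    simp only [mul_assoc]
    rw [hB1, mul_one]
  have hu : IsUnit C.det := (Matrix.isUnit_iff_isUnit_det _).1 hC.isUnit
  have e1 : C⁻¹ * C = 1 := Matrix.nonsing_inv_mul _ hu
  have e2 : C * C⁻¹ = 1 := Matrix.mul_nonsing_inv _ hu
  have hCi : (C⁻¹)ᴴ = C⁻¹ := hC.inv.1.eq
  have hY'h : ((C⁻¹ ⊗ₖ (1 : Matrix (Fin d') (Fin d') ℂ)) * X * (C⁻¹ ⊗ₖ 1)).IsHermitian := by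
    have := (hX.mul_mul_conjTranspose_same (C⁻¹ ⊗ₖ (1 : Matrix (Fin d') (Fin d') ℂ))).1
    rwa [conjTranspose_kronecker, hCi, conjTranspose_one] at this
  refine ⟨C, (C⁻¹ ⊗ₖ (1 : Matrix (Fin d') (Fin d') ℂ)) * X * (C⁻¹ ⊗ₖ 1), hC, ?_, ?_, ?_⟩
  · rw [hC.1.eq]
    have k1 : (C ⊗ₖ (1 : Matrix (Fin d') (Fin d') ℂ)) * (C⁻¹ ⊗ₖ 1) = 1 := by
      rw [← mul_kronecker_mul, e2, mul_one, one_kronecker_one]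
    have k2 : (C⁻¹ ⊗ₖ (1 : Matrix (Fin d') (Fin d') ℂ)) * (C ⊗ₖ 1) = 1 := mul_eq_one_comm.1 k1
    calc X = 1 * X * 1 := by simp
      _ = _ := by
        rw [← k2]
        nth_rewrite 1 [k2]
        rw [← k1]
        simp only [mul_assoc]
  · refine c_bound hr hε.le (A' := A') (B' := B') (V := V) ?_ ?_ hV1 ?_
    · rw [hA'h.eq, hAA, conjTranspose_conjTranspose]
    · rw [hB'h.eq, hBB]
    · rw [hC.1.eq, hA'h.eq, hCV]
  · -- similarity
    have hF : ‖(Ai * A) ⊗ₖ (1 : Matrix (Fin d') (Fin d') ℂ)‖ ≤ 1 := by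
      have h0 := kron_contr (m := Fin d') hAK
      rw [← Matrix.l2_opNorm_conjTranspose, conjTranspose_kronecker, conjTranspose_mul,
        hAih.eq, conjTranspose_conjTranspose, conjTranspose_one] at h0
      exact h0
    have hG : ‖((B * Bi) ⊗ₖ (1 : Matrix (Fin d') (Fin d') ℂ)) * (Vᴴ ⊗ₖ 1)‖ ≤ 1 := by
      refine (norm_mul_le _ _).trans (mul_le_one₀ (kron_contr hBK) (norm_nonneg _) ?_)
      refine kron_contr (Q := 0) ?_
      simpa using hV2
    have hT : ((Ai * C) ⊗ₖ (1 : Matrix (Fin d') (Fin d') ℂ)) * ((C⁻¹ * A') ⊗ₖ 1) = 1 := by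
      rw [← mul_kronecker_mul, mul_one, mul_assoc, ← mul_assoc C, e2, one_mul, hA1,
        one_kronecker_one]
    refine schatten_le hq hY'h hF hG hT ?_
    have f1 : C⁻¹ * A = C⁻¹ * A' * (Ai * A) := by
      rw [mul_assoc, ← mul_assoc A', hA2, one_mul]
    have f2 : B * C⁻¹ = B * Bi * Vᴴ * (Ai * C) := by
      have : Bi * (Vᴴ * (Ai * (C * C))) = 1 := by
        rw [hCV, mul_assoc A', ← mul_assoc Ai, hA1, one_mul, ← mul_assoc Vᴴ, hV1, one_mul, hB1]
      calc B * C⁻¹ = B * (Bi * (Vᴴ * (Ai * (C * C)))) * C⁻¹ := by rw [this, mul_one]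
        _ = B * Bi * Vᴴ * (Ai * C) * (C * C⁻¹) := by simp only [mul_assoc]
        _ = _ := by rw [e2, mul_one]
    have g1 : (C⁻¹ ⊗ₖ (1 : Matrix (Fin d') (Fin d') ℂ)) * (A ⊗ₖ 1) =
        ((C⁻¹ * A') ⊗ₖ 1) * ((Ai * A) ⊗ₖ 1) := by
      rw [← mul_kronecker_mul, ← mul_kronecker_mul, f1]
    have g2 : (B ⊗ₖ (1 : Matrix (Fin d') (Fin d') ℂ)) * (C⁻¹ ⊗ₖ 1) =
        ((B * Bi) ⊗ₖ 1) * (Vᴴ ⊗ₖ 1) * ((Ai * C) ⊗ₖ 1) := by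
      rw [← mul_kronecker_mul, ← mul_kronecker_mul, ← mul_kronecker_mul, f2]; simp
    calc _ = ((C⁻¹ ⊗ₖ (1 : Matrix (Fin d') (Fin d') ℂ)) * (A ⊗ₖ 1)) * Y *
          ((B ⊗ₖ (1 : Matrix (Fin d') (Fin d') ℂ)) * (C⁻¹ ⊗ₖ 1)) := by
            rw [h]; simp only [mul_assoc]
      _ = _ := by rw [g1, g2]; simp only [mul_assoc]

lemma sNormE_nonneg (q : ℝ≥0∞) (M : Matrix n n ℂ) : 0 ≤ sNormE q M := by
  unfold sNormE
  split_ifs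
  · rw [opN_eq]; exact norm_nonneg _
  · exact Real.rpow_nonneg (Finset.sum_nonneg fun i _ => Real.rpow_nonneg
      ((Matrix.posSemidef_conjTranspose_mul_self M).eigenvalues_nonneg i) _) _

end Stmt5Aux

/-- for `1 ≤ p ≤ q ≤ ∞`, `1/p = 1/q + 1/r`, and a positive semidefinite `X` on
`ℂ^d ⊗ ℂ^{d'}`, the infimum of `‖A‖_{S_{2r}}‖Y‖_{S_q}‖A*‖_{S_{2r}}` over symmetric positive
factorizations `X = (A⊗I) Y (A*⊗I)` (with `A` positive definite) equals the infimum of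
`‖A‖_{S_{2r}}‖Y‖_{S_q}‖B‖_{S_{2r}}` over all factorizations `X = (A⊗I) Y (B⊗I)`. -/
theorem stmt5 {d d' : ℕ} (p q r : ℝ≥0∞) (hp : 1 ≤ p) (hpq : p ≤ q)
    (hr : 1 / p = 1 / q + 1 / r)
    (X : Matrix (Fin d × Fin d') (Fin d × Fin d') ℂ) (hX : X.PosSemidef) :
    sInf {c : ℝ | ∃ (A : Matrix (Fin d) (Fin d) ℂ)
        (Y : Matrix (Fin d × Fin d') (Fin d × Fin d') ℂ), A.PosDef ∧
        X = (A ⊗ₖ (1 : Matrix (Fin d') (Fin d') ℂ)) * Y * (Aᴴ ⊗ₖ 1) ∧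
        c = sNormE (2 * r) A * sNormE q Y * sNormE (2 * r) Aᴴ} =
    sInf {c : ℝ | ∃ (A B : Matrix (Fin d) (Fin d) ℂ)
        (Y : Matrix (Fin d × Fin d') (Fin d × Fin d') ℂ),
        X = (A ⊗ₖ (1 : Matrix (Fin d') (Fin d') ℂ)) * Y * (B ⊗ₖ 1) ∧
        c = sNormE (2 * r) A * sNormE q Y * sNormE (2 * r) B} := by
  open Stmt5Aux in
  have hq : 1 ≤ q := hp.trans hpq
  have hr1 : 1 ≤ r := by
    have h1 : 1 / r ≤ 1 := by
      calc 1 / r ≤ 1 / q + 1 / r := le_add_self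
        _ = 1 / p := hr.symm
        _ ≤ 1 := by simpa using hp
    simpa using h1
  apply le_antisymm
  · refine le_csInf ⟨_, 1, 1, X, by simp, rfl⟩ ?_
    rintro c ⟨A, B, Y, hXe, rfl⟩
    have hlim : Filter.Tendsto (fun ε => phi r A ε * phi r B ε * sNormE q Y)
        (nhdsWithin 0 (Set.Ioi 0))
        (nhds (phi r A 0 * phi r B 0 * sNormE q Y)) := by
      refine Filter.Tendsto.mono_left ?_ nhdsWithin_le_nhds
      exact (((phi_cont hr1 A).mul (phi_cont hr1 B)).mul continuous_const).tendsto 0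
    rw [phi_zero, phi_zero] at hlim
    have e : sNormE (2 * r) A * sNormE q Y * sNormE (2 * r) B =
        sNormE (2 * r) A * sNormE (2 * r) B * sNormE q Y := by ring
    rw [e]
    refine ge_of_tendsto hlim ?_
    filter_upwards [self_mem_nhdsWithin] with ε hε
    obtain ⟨C, Y', hC, hXC, h1, h2⟩ := main_eps q r hq hr1 X hX A B Y hXe hε
    refine le_trans (csInf_le (a := sNormE (2 * r) C * sNormE q Y' * sNormE (2 * r) Cᴴ) ?_
      ⟨C, Y', hC, hXC, rfl⟩) ?_
    · refine ⟨0, ?_⟩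
      rintro c ⟨A, Y, -, -, rfl⟩
      exact mul_nonneg (mul_nonneg (sNormE_nonneg _ _) (sNormE_nonneg _ _)) (sNormE_nonneg _ _)
    · rw [hC.1.eq]
      calc _ = sNormE (2 * r) C ^ 2 * sNormE q Y' := by ring
        _ ≤ phi r A ε * phi r B ε * sNormE q Y :=
          mul_le_mul h1 h2 (sNormE_nonneg _ _) (le_trans (sq_nonneg _) h1)
  · refine csInf_le_csInf ?_ ⟨_, 1, X, Matrix.PosDef.one, by simp, rfl⟩ ?_
    · refine ⟨0, ?_⟩
      rintro c ⟨A, B, Y, -, rfl⟩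
      exact mul_nonneg (mul_nonneg (sNormE_nonneg _ _) (sNormE_nonneg _ _)) (sNormE_nonneg _ _)
    · rintro c ⟨A, Y, -, hXe, rfl⟩
      exact ⟨A, Aᴴ, Y, hXe, rfl⟩
end

section
/- Let 1 ≤ p ≤ q ≤ ∞, 1/p = 1/q + 1/r, and let X be a positive semidefinite operator on ℂ^d ⊗ ℂ^{d'}. Then sup over A, B ∈ M_d(ℂ) with ‖A‖_{S_{2r}}, ‖B‖_{S_{2r}} ≤ 1 of ‖(A⊗I) X (B⊗I)‖_{S_p} equals the same supremum restricted to B = A* with A positive semidefinite; in particular for positive X, ‖(A⊗I)X(B⊗I)‖_{S_p} ≤ max(‖(A⊗I)X(A*⊗I)‖_{S_p}, ‖(B*⊗I)X(B⊗I)‖_{S_p}). -/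
open scoped Kronecker ComplexOrder ENNReal
open Matrix

section Helpers

variable {n : Type*} [Fintype n] [DecidableEq n]

lemma sum_eig_eq_roots {Y : Matrix n n ℂ} (hY : Y.IsHermitian) (f : ℝ → ℝ) :
    ∑ i, f (hY.eigenvalues i) = (Y.charpoly.roots.map (fun z => f z.re)).sum := by
  rw [hY.roots_charpoly_eq_eigenvalues, Multiset.map_map]
  rfl

lemma sum_eig_congr {Y Z : Matrix n n ℂ} (hY : Y.IsHermitian) (hZ : Z.IsHermitian)
    (h : Y.charpoly = Z.charpoly) (f : ℝ → ℝ) :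
    ∑ i, f (hY.eigenvalues i) = ∑ i, f (hZ.eigenvalues i) := by
  rw [sum_eig_eq_roots, sum_eig_eq_roots, h]

lemma charpoly_sq {Y : Matrix n n ℂ} (hY : Y.IsHermitian) :
    (Yᴴ * Y).charpoly = ∏ i, (Polynomial.X - Polynomial.C (((hY.eigenvalues i) ^ 2 : ℝ) : ℂ)) := by
  rw [hY.eq]
  conv_lhs => rw [hY.spectral_theorem]
  rw [← map_mul, Matrix.diagonal_mul_diagonal, Unitary.conjStarAlgAut_apply, mul_assoc,
    Matrix.charpoly_mul_comm, mul_assoc]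
  simp [Matrix.charpoly_diagonal, pow_two]

/-- Schatten norm of a positive semidefinite matrix through its own eigenvalues. -/
lemma sNorm_psd {Y : Matrix n n ℂ} (hY : Y.PosSemidef) (p : ℝ) :
    sNorm p Y = (∑ i, (hY.1.eigenvalues i) ^ p) ^ (1 / p) := by
  unfold sNorm
  congr 1
  rw [sum_eig_eq_roots _ (fun x => x ^ (p / 2)), charpoly_sq hY.1, Polynomial.roots_prod]
  · simp only [Polynomial.roots_X_sub_C, Multiset.bind_singleton, Multiset.map_map]
    refine Finset.sum_congr rfl fun i _ => ?_
    simp only [Function.comp, Complex.ofReal_re]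
    rw [← Real.rpow_natCast, ← Real.rpow_mul (hY.eigenvalues_nonneg i)]
    congr 1
    push_cast
    ring
  · exact Finset.prod_ne_zero_iff.2 fun i _ => Polynomial.X_sub_C_ne_zero _

/-- Jensen: diagonal entries in an orthonormal family are dominated by eigenvalues. -/
lemma jensen_psd {Y : Matrix n n ℂ} (hY : Y.PosSemidef) {p : ℝ} (hp : 1 ≤ p)
    {ι : Type*} [Fintype ι] (w : ι → EuclideanSpace ℂ n) (hw : Orthonormal ℂ w) :
    ∑ i, (RCLike.re (inner ℂ (w i) (toEuclideanCLM (n := n) (𝕜 := ℂ) Y (w i)))) ^ p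
      ≤ ∑ j, (hY.1.eigenvalues j) ^ p := by
  set v := hY.1.eigenvectorBasis with hv
  have hYv : ∀ j, toEuclideanCLM (n := n) (𝕜 := ℂ) Y (v j) =
      ((hY.1.eigenvalues j : ℝ) : ℂ) • v j := by
    intro j
    apply WithLp.ofLp_injective 2
    rw [ofLp_toEuclideanCLM, hv, hY.1.mulVec_eigenvectorBasis]
    simp
  have key : ∀ x : EuclideanSpace ℂ n,
      RCLike.re (inner ℂ x (toEuclideanCLM (n := n) (𝕜 := ℂ) Y x)) =
        ∑ j, ‖inner ℂ x (v j)‖ ^ 2 * hY.1.eigenvalues j := by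
    intro x
    have e : toEuclideanCLM (n := n) (𝕜 := ℂ) Y x =
        ∑ j, toEuclideanCLM (n := n) (𝕜 := ℂ) Y (inner ℂ (v j) x • v j) := by
      rw [← map_sum, v.sum_repr' x]
    rw [e, inner_sum, map_sum]
    refine Finset.sum_congr rfl fun j _ => ?_
    rw [map_smul, hYv, inner_smul_right, inner_smul_right, ← inner_conj_symm (v j) x]
    rw [mul_left_comm, RCLike.conj_mul]
    have h3 : ((((‖inner ℂ x (v j)‖ : ℝ) : ℂ)) ^ 2).re = ‖inner ℂ x (v j)‖ ^ 2 := by norm_cast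
    have h4 : ((((hY.1.eigenvalues j : ℝ) : ℂ)) * (((‖inner ℂ x (v j)‖ : ℝ) : ℂ)) ^ 2).re =
        ‖inner ℂ x (v j)‖ ^ 2 * hY.1.eigenvalues j := by
      rw [Complex.re_ofReal_mul, h3, mul_comm]
    exact h4
  calc _ ≤ ∑ i, ∑ j, ‖inner ℂ (w i) (v j)‖ ^ 2 * (hY.1.eigenvalues j) ^ p := by
        refine Finset.sum_le_sum fun i _ => ?_
        rw [key]
        apply Real.rpow_arith_mean_le_arith_mean_rpow _ _ _ _ _ _ hp
        · intros; positivity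
        · rw [v.sum_sq_norm_inner_left, hw.1]; simp
        · intro j _; exact hY.eigenvalues_nonneg j
    _ = ∑ j, (∑ i, ‖inner ℂ (w i) (v j)‖ ^ 2) * (hY.1.eigenvalues j) ^ p := by
        rw [Finset.sum_comm]
        simp_rw [Finset.sum_mul]
    _ ≤ _ := by
        refine Finset.sum_le_sum fun j _ => ?_
        have h1 : ∑ i, ‖inner ℂ (w i) (v j)‖ ^ 2 ≤ 1 := by
          have := hw.sum_inner_products_le (v j) (s := Finset.univ)
          simpa using this
        have h2 := Real.rpow_nonneg (hY.eigenvalues_nonneg j) p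
        nlinarith

lemma norm_sq_clm (L : Matrix n n ℂ) (x : EuclideanSpace ℂ n) :
    RCLike.re (inner ℂ x (toEuclideanCLM (n := n) (𝕜 := ℂ) (Lᴴ * L) x)) =
      ‖toEuclideanCLM (n := n) (𝕜 := ℂ) L x‖ ^ 2 := by
  rw [← Matrix.star_eq_conjTranspose, map_mul, map_star, ContinuousLinearMap.star_eq_adjoint,
    mul_apply_eq_comp, ContinuousLinearMap.adjoint_inner_right,
    inner_self_eq_norm_sq]

/-- Cauchy-Schwarz for Schatten norms, power-sum form. -/
lemma cs_sum (K L : Matrix n n ℂ) {p : ℝ} (hp : 1 ≤ p) :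
    ∑ i, ((Matrix.posSemidef_conjTranspose_mul_self (K * L)).1.eigenvalues i) ^ (p / 2) ≤
      max (∑ i, ((Matrix.posSemidef_self_mul_conjTranspose K).1.eigenvalues i) ^ p)
        (∑ i, ((Matrix.posSemidef_conjTranspose_mul_self L).1.eigenvalues i) ^ p) := by
  set hT := Matrix.posSemidef_conjTranspose_mul_self (K * L)
  set σ := hT.1.eigenvalues with hσ
  set u := hT.1.eigenvectorBasis with hu
  have hσ0 : ∀ i, 0 ≤ σ i := hT.eigenvalues_nonneg
  set F := toEuclideanCLM (n := n) (𝕜 := ℂ) with hF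
  have hTu : ∀ j, F ((K * L)ᴴ * (K * L)) (u j) = ((σ j : ℝ) : ℂ) • u j := by
    intro j
    apply WithLp.ofLp_injective 2
    rw [ofLp_toEuclideanCLM, hu, hT.1.mulVec_eigenvectorBasis]
    simp [hσ]
  have hin : ∀ i j, inner ℂ (F (K * L) (u i)) (F (K * L) (u j)) =
      ((σ j : ℝ) : ℂ) * inner ℂ (u i) (u j) := by
    intro i j
    rw [← inner_smul_right, ← hTu, ← Matrix.star_eq_conjTranspose, map_mul F (star (K * L)), map_star,
      ContinuousLinearMap.star_eq_adjoint, mul_apply_eq_comp,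
      ContinuousLinearMap.adjoint_inner_right]
  let w : {i // σ i ≠ 0} → EuclideanSpace ℂ n :=
    fun i => (((√(σ i))⁻¹ : ℝ) : ℂ) • F (K * L) (u i)
  have hsq : ∀ i : {i // σ i ≠ 0}, 0 < √(σ i) := fun i =>
    Real.sqrt_pos.2 (lt_of_le_of_ne (hσ0 i) (Ne.symm i.2))
  have hw : Orthonormal ℂ w := by
    rw [orthonormal_iff_ite]
    intro i j
    simp only [w]
    rw [inner_smul_left, inner_smul_right, hin, orthonormal_iff_ite.1 u.orthonormal]
    by_cases h : i = j
    · subst h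
      have h1 := hsq i
      have h2 := Real.mul_self_sqrt (hσ0 i)
      simp only [if_true, mul_one, Complex.conj_ofReal]
      norm_cast
      rw [← mul_assoc]
      nth_rewrite 3 [← h2]
      field_simp
    · have : (i : n) ≠ j := fun h' => h (Subtype.ext h')
      simp [h, this]
  have hu' : Orthonormal ℂ (fun i : {i // σ i ≠ 0} => u i) :=
    u.orthonormal.comp _ Subtype.val_injective
  have J1 := jensen_psd (Matrix.posSemidef_self_mul_conjTranspose K) hp w hw
  have J2 := jensen_psd (Matrix.posSemidef_conjTranspose_mul_self L) hp _ hu'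
  have hstep : ∀ i : {i // σ i ≠ 0}, √(σ i) ≤ ‖F Kᴴ (w i)‖ * ‖F L (u i)‖ := by
    intro i
    have h1 : inner ℂ (F Kᴴ (w i)) (F L (u i)) = ((√(σ i) : ℝ) : ℂ) := by
      rw [← Matrix.star_eq_conjTranspose, map_star, ContinuousLinearMap.star_eq_adjoint,
        ContinuousLinearMap.adjoint_inner_left, ← mul_apply_eq_comp, ← map_mul]
      simp only [w]
      rw [inner_smul_left, hin, orthonormal_iff_ite.1 u.orthonormal]
      simp only [if_true, mul_one, Complex.conj_ofReal]
      norm_cast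
      have h1 := hsq i
      have h2 := Real.mul_self_sqrt (hσ0 i)
      nth_rewrite 2 [← h2]
      field_simp
    have h2 := norm_inner_le_norm (𝕜 := ℂ) (F Kᴴ (w i)) (F L (u i))
    rw [h1, Complex.norm_real, Real.norm_of_nonneg (hsq i).le] at h2
    exact h2
  have hs : ∑ i, σ i ^ (p / 2) = ∑ i : {i // σ i ≠ 0}, σ i ^ (p / 2) := by
    rw [← Finset.sum_filter_add_sum_filter_not Finset.univ (fun i => σ i ≠ 0),
      Finset.sum_subtype (p := fun i => σ i ≠ 0) _ (by simp)]
    convert add_zero _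
    refine Finset.sum_eq_zero fun i hi => ?_
    have h0 : σ i = 0 := by simpa using hi
    rw [h0, Real.zero_rpow (by linarith)]
  have hfin : ∀ i : {i // σ i ≠ 0}, σ i ^ (p / 2) ≤
      ((‖F Kᴴ (w i)‖ ^ 2) ^ p + (‖F L (u i)‖ ^ 2) ^ p) / 2 := by
    intro i
    have e1 : σ i ^ (p / 2) = √(σ i) ^ p := by
      rw [Real.sqrt_eq_rpow, ← Real.rpow_mul (hσ0 i)]
      congr 1
      ring
    have e2 : √(σ i) ^ p ≤ ‖F Kᴴ (w i)‖ ^ p * ‖F L (u i)‖ ^ p := by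
      rw [← Real.mul_rpow (norm_nonneg _) (norm_nonneg _)]
      exact Real.rpow_le_rpow (hsq i).le (hstep i) (by linarith)
    have e3 : ∀ a : ℝ, 0 ≤ a → (a ^ 2) ^ p = (a ^ p) ^ 2 := by
      intro a ha
      rw [pow_two, pow_two, Real.mul_rpow ha ha]
    rw [e1, e3 _ (norm_nonneg _), e3 _ (norm_nonneg _)]
    nlinarith [sq_nonneg (‖F Kᴴ (w i)‖ ^ p - ‖F L (u i)‖ ^ p)]
  have J1' : ∑ i, (‖F Kᴴ (w i)‖ ^ 2) ^ p ≤
      ∑ i, ((Matrix.posSemidef_self_mul_conjTranspose K).1.eigenvalues i) ^ p := by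
    refine le_trans (le_of_eq (Finset.sum_congr rfl fun i _ => ?_)) J1
    rw [← norm_sq_clm, conjTranspose_conjTranspose]
  have J2' : ∑ i : {i // σ i ≠ 0}, (‖F L (u i)‖ ^ 2) ^ p ≤
      ∑ i, ((Matrix.posSemidef_conjTranspose_mul_self L).1.eigenvalues i) ^ p := by
    refine le_trans (le_of_eq (Finset.sum_congr rfl fun i _ => ?_)) J2
    rw [← norm_sq_clm]
  rw [hs]
  refine (Finset.sum_le_sum fun i _ => hfin i).trans ?_
  rw [← Finset.sum_div, Finset.sum_add_distrib]
  have m1 := le_max_left (∑ i, ((Matrix.posSemidef_self_mul_conjTranspose K).1.eigenvalues i) ^ p)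
        (∑ i, ((Matrix.posSemidef_conjTranspose_mul_self L).1.eigenvalues i) ^ p)
  have m2 := le_max_right (∑ i, ((Matrix.posSemidef_self_mul_conjTranspose K).1.eigenvalues i) ^ p)
        (∑ i, ((Matrix.posSemidef_conjTranspose_mul_self L).1.eigenvalues i) ^ p)
  linarith

open scoped Matrix.Norms.L2Operator in
lemma opN_eq (M : Matrix n n ℂ) : opN M = ‖M‖ := rfl

open scoped Matrix.Norms.L2Operator in
lemma opN_congr {M N : Matrix n n ℂ} (h : Mᴴ * M = Nᴴ * N) : opN M = opN N := by
  rw [opN_eq, opN_eq]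
  have h1 := Matrix.l2_opNorm_conjTranspose_mul_self M
  have h2 := Matrix.l2_opNorm_conjTranspose_mul_self N
  rw [h, h2] at h1
  nlinarith [norm_nonneg M, norm_nonneg N]

open scoped Matrix.Norms.L2Operator in
lemma sNormE_cs (K L : Matrix n n ℂ) {p : ℝ≥0∞} (hp : 1 ≤ p) :
    sNormE p (K * L) ≤ max (sNormE p (K * Kᴴ)) (sNormE p (Lᴴ * L)) := by
  unfold sNormE
  split_ifs with h
  · simp only [opN_eq]
    rw [Matrix.l2_opNorm_conjTranspose_mul_self]
    have h1 := Matrix.l2_opNorm_conjTranspose_mul_self Kᴴ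
    rw [conjTranspose_conjTranspose, Matrix.l2_opNorm_conjTranspose] at h1
    rw [h1]
    refine (Matrix.l2_opNorm_mul K L).trans ?_
    rcases le_total ‖K‖ ‖L‖ with h | h
    · exact le_max_of_le_right (mul_le_mul_of_nonneg_right h (norm_nonneg _))
    · exact le_max_of_le_left (mul_le_mul_of_nonneg_left h (norm_nonneg _))
  · have hp' : 1 ≤ p.toReal := by
      rw [← ENNReal.toReal_one]
      exact ENNReal.toReal_mono h hp
    have hi : 0 ≤ 1 / p.toReal := by positivity
    rw [sNorm_psd (Matrix.posSemidef_self_mul_conjTranspose K),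
      sNorm_psd (Matrix.posSemidef_conjTranspose_mul_self L), sNorm]
    have h0 : 0 ≤ ∑ i, ((Matrix.posSemidef_conjTranspose_mul_self
        (K * L)).1.eigenvalues i) ^ (p.toReal / 2) :=
      Finset.sum_nonneg fun i _ => Real.rpow_nonneg
        ((Matrix.posSemidef_conjTranspose_mul_self (K * L)).eigenvalues_nonneg i) _
    rcases le_max_iff.1 (cs_sum K L hp') with h | h
    · exact le_max_of_le_left (Real.rpow_le_rpow h0 h hi)
    · exact le_max_of_le_right (Real.rpow_le_rpow h0 h hi)

lemma sNormE_congr {M N : Matrix n n ℂ} (h : Mᴴ * M = Nᴴ * N) (p : ℝ≥0∞) :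
    sNormE p M = sNormE p N := by
  unfold sNormE
  rw [opN_congr h, sNorm, sNorm, sum_eig_congr _ (Matrix.posSemidef_conjTranspose_mul_self N).1
    (by rw [h]) (fun x => x ^ (p.toReal / 2))]

open scoped Matrix.Norms.L2Operator in
lemma sNormE_conjTranspose (M : Matrix n n ℂ) (p : ℝ≥0∞) : sNormE p Mᴴ = sNormE p M := by
  unfold sNormE
  rw [opN_eq, opN_eq, Matrix.l2_opNorm_conjTranspose, sNorm, sNorm,
    sum_eig_congr _ (Matrix.posSemidef_conjTranspose_mul_self M).1
    (by rw [conjTranspose_conjTranspose, Matrix.charpoly_mul_comm]) (fun x => x ^ (p.toReal / 2))]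

open scoped Matrix.Norms.L2Operator in
lemma sNormE_self_mul (K : Matrix n n ℂ) (p : ℝ≥0∞) : sNormE p (K * Kᴴ) = sNormE p (Kᴴ * K) := by
  unfold sNormE
  have h1 := Matrix.l2_opNorm_conjTranspose_mul_self Kᴴ
  rw [conjTranspose_conjTranspose, Matrix.l2_opNorm_conjTranspose] at h1
  rw [opN_eq, opN_eq, Matrix.l2_opNorm_conjTranspose_mul_self, h1,
    sNorm_psd (Matrix.posSemidef_self_mul_conjTranspose K),
    sNorm_psd (Matrix.posSemidef_conjTranspose_mul_self K),
    sum_eig_congr _ (Matrix.posSemidef_conjTranspose_mul_self K).1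
    (by rw [Matrix.charpoly_mul_comm]) (fun x => x ^ p.toReal)]

open scoped MatrixOrder in
lemma psd_factor {X : Matrix n n ℂ} (hX : X.PosSemidef) : ∃ Z : Matrix n n ℂ, X = Zᴴ * Z := by
  obtain ⟨Z, hZ⟩ := CStarAlgebra.nonneg_iff_eq_star_mul_self.mp hX.nonneg
  exact ⟨Z, hZ⟩

lemma sNormE_sandwich {X M N : Matrix n n ℂ} (hX : X.PosSemidef) (h : Mᴴ * M = Nᴴ * N)
    (p : ℝ≥0∞) : sNormE p (M * X * Mᴴ) = sNormE p (N * X * Nᴴ) := by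
  obtain ⟨Z, rfl⟩ := psd_factor hX
  have e : ∀ M : Matrix n n ℂ, sNormE p (M * (Zᴴ * Z) * Mᴴ) = sNormE p (Z * (Mᴴ * M) * Zᴴ) := by
    intro M
    have := sNormE_self_mul (M * Zᴴ) p
    simpa [mul_assoc] using this
  rw [e, e, h]

lemma sNormE_max {X : Matrix n n ℂ} (hX : X.PosSemidef) (M N : Matrix n n ℂ)
    {p : ℝ≥0∞} (hp : 1 ≤ p) :
    sNormE p (M * X * N) ≤ max (sNormE p (M * X * Mᴴ)) (sNormE p (Nᴴ * X * N)) := by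
  obtain ⟨Z, rfl⟩ := psd_factor hX
  have := sNormE_cs (M * Zᴴ) (Z * N) hp
  simpa [mul_assoc] using this

open scoped MatrixOrder in
lemma exists_abs (A : Matrix n n ℂ) : ∃ P : Matrix n n ℂ, P.PosSemidef ∧ Pᴴ * P = Aᴴ * A := by
  have h0 := (Matrix.posSemidef_conjTranspose_mul_self A).nonneg
  have hP : (CFC.sqrt (Aᴴ * A)).PosSemidef := (CFC.sqrt_nonneg _).posSemidef
  exact ⟨CFC.sqrt (Aᴴ * A), hP, by rw [hP.1.eq, CFC.sqrt_mul_sqrt_self _ h0]⟩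

end Helpers

/-- for `1 ≤ p ≤ q ≤ ∞`, `1/p = 1/q + 1/r`, and positive semidefinite `X`,
the sup of `‖(A⊗I) X (B⊗I)‖_{S_p}` over `‖A‖_{S_{2r}}, ‖B‖_{S_{2r}} ≤ 1` equals the sup
restricted to `B = A*` with `A` positive semidefinite; in particular
`‖(A⊗I)X(B⊗I)‖_{S_p} ≤ max(‖(A⊗I)X(A*⊗I)‖_{S_p}, ‖(B*⊗I)X(B⊗I)‖_{S_p})`. -/
theorem stmt6 {d d' : ℕ} (p q r : ℝ≥0∞) (hp : 1 ≤ p) (hpq : p ≤ q)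
    (hr : 1 / p = 1 / q + 1 / r)
    (X : Matrix (Fin d × Fin d') (Fin d × Fin d') ℂ) (hX : X.PosSemidef) :
    (sSup {c : ℝ | ∃ A B : Matrix (Fin d) (Fin d) ℂ,
        sNormE (2 * r) A ≤ 1 ∧ sNormE (2 * r) B ≤ 1 ∧
        c = sNormE p ((A ⊗ₖ (1 : Matrix (Fin d') (Fin d') ℂ)) * X * (B ⊗ₖ 1))} =
      sSup {c : ℝ | ∃ A : Matrix (Fin d) (Fin d) ℂ, A.PosSemidef ∧
        sNormE (2 * r) A ≤ 1 ∧
        c = sNormE p ((A ⊗ₖ (1 : Matrix (Fin d') (Fin d') ℂ)) * X * (Aᴴ ⊗ₖ 1))}) ∧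
    ∀ A B : Matrix (Fin d) (Fin d) ℂ,
      sNormE p ((A ⊗ₖ (1 : Matrix (Fin d') (Fin d') ℂ)) * X * (B ⊗ₖ 1)) ≤
        max (sNormE p ((A ⊗ₖ (1 : Matrix (Fin d') (Fin d') ℂ)) * X * (Aᴴ ⊗ₖ 1)))
          (sNormE p ((Bᴴ ⊗ₖ (1 : Matrix (Fin d') (Fin d') ℂ)) * X * (B ⊗ₖ 1))) := by
  have kct : ∀ A : Matrix (Fin d) (Fin d) ℂ,
      (A ⊗ₖ (1 : Matrix (Fin d') (Fin d') ℂ))ᴴ = Aᴴ ⊗ₖ 1 := by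
    intro A
    rw [Matrix.conjTranspose_kronecker, conjTranspose_one]
  have hmax : ∀ A B : Matrix (Fin d) (Fin d) ℂ,
      sNormE p ((A ⊗ₖ (1 : Matrix (Fin d') (Fin d') ℂ)) * X * (B ⊗ₖ 1)) ≤
        max (sNormE p ((A ⊗ₖ (1 : Matrix (Fin d') (Fin d') ℂ)) * X * (Aᴴ ⊗ₖ 1)))
          (sNormE p ((Bᴴ ⊗ₖ (1 : Matrix (Fin d') (Fin d') ℂ)) * X * (B ⊗ₖ 1))) := by
    intro A B
    have := sNormE_max hX (A ⊗ₖ (1 : Matrix (Fin d') (Fin d') ℂ)) (B ⊗ₖ 1) hp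
    rwa [kct, kct] at this
  refine ⟨?_, hmax⟩
  have hpol : ∀ A : Matrix (Fin d) (Fin d) ℂ, sNormE (2 * r) A ≤ 1 →
      ∃ P : Matrix (Fin d) (Fin d) ℂ, P.PosSemidef ∧ sNormE (2 * r) P ≤ 1 ∧
        sNormE p ((A ⊗ₖ (1 : Matrix (Fin d') (Fin d') ℂ)) * X * (Aᴴ ⊗ₖ 1)) =
        sNormE p ((P ⊗ₖ (1 : Matrix (Fin d') (Fin d') ℂ)) * X * (Pᴴ ⊗ₖ 1)) := by
    intro A hA
    obtain ⟨P, hP, hPA⟩ := exists_abs A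
    refine ⟨P, hP, by rwa [sNormE_congr hPA], ?_⟩
    rw [← kct, ← kct]
    apply sNormE_sandwich hX
    rw [kct, kct, ← Matrix.mul_kronecker_mul, ← Matrix.mul_kronecker_mul, hPA]
  set S := {c : ℝ | ∃ A B : Matrix (Fin d) (Fin d) ℂ,
        sNormE (2 * r) A ≤ 1 ∧ sNormE (2 * r) B ≤ 1 ∧
        c = sNormE p ((A ⊗ₖ (1 : Matrix (Fin d') (Fin d') ℂ)) * X * (B ⊗ₖ 1))} with hS
  set T := {c : ℝ | ∃ A : Matrix (Fin d) (Fin d) ℂ, A.PosSemidef ∧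
        sNormE (2 * r) A ≤ 1 ∧
        c = sNormE p ((A ⊗ₖ (1 : Matrix (Fin d') (Fin d') ℂ)) * X * (Aᴴ ⊗ₖ 1))} with hT
  have hTS : T ⊆ S := by
    rintro c ⟨A, _, hA, rfl⟩
    exact ⟨A, Aᴴ, hA, by rwa [sNormE_conjTranspose], rfl⟩
  have hST : ∀ c ∈ S, ∃ t ∈ T, c ≤ t := by
    rintro c ⟨A, B, hA, hB, rfl⟩
    rcases le_max_iff.1 (hmax A B) with h | h
    · obtain ⟨P, hP, hP1, e⟩ := hpol A hA
      exact ⟨_, ⟨P, hP, hP1, rfl⟩, h.trans e.le⟩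
    · obtain ⟨P, hP, hP1, e⟩ := hpol Bᴴ (by rwa [sNormE_conjTranspose])
      rw [conjTranspose_conjTranspose] at e
      exact ⟨_, ⟨P, hP, hP1, rfl⟩, h.trans e.le⟩
  have hub : upperBounds S = upperBounds T := by
    refine Set.Subset.antisymm (upperBounds_mono_set hTS) ?_
    intro b hb c hc
    obtain ⟨t, ht, hct⟩ := hST c hc
    exact hct.trans (hb ht)
  by_cases hbd : BddAbove T
  · have hbS : BddAbove S := by
      unfold BddAbove
      rw [hub]
      exact hbd
    rcases T.eq_empty_or_nonempty with h | h
    · have : S = ∅ := by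
        rw [Set.eq_empty_iff_forall_notMem]
        intro c hc
        obtain ⟨t, ht, _⟩ := hST c hc
        rw [h] at ht
        exact ht
      rw [h, this]
    · apply le_antisymm
      · apply csSup_le (h.mono hTS)
        intro c hc
        obtain ⟨t, ht, hct⟩ := hST c hc
        exact hct.trans (le_csSup hbd ht)
      · exact csSup_le_csSup hbS h hTS
  · have hbS : ¬ BddAbove S := fun h => hbd (h.mono hTS)
    rw [Real.sSup_of_not_bddAbove hbd, Real.sSup_of_not_bddAbove hbS]
end

section
/- The sandwiched Rényi conditional entropy H_α(X|Y)_ρ := -inf_{σ_Y} (α/(α-1)) log ‖(I⊗σ_Y^{(1-α)/(2α)}) ρ_{XY} (I⊗σ_Y^{(1-α)/(2α)})‖_{S_α} (infimum over density matrices σ_Y) is monotone non-increasing in α for α ≥ 1: if 1 ≤ β ≤ α then H_α(X|Y)_ρ ≤ H_β(X|Y)_ρ. -/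
open scoped Kronecker ComplexOrder
open Matrix

/-- Real power of a Hermitian matrix, via the spectral decomposition (with the
convention `0 ^ r = 0` for `r ≠ 0`, i.e. negative powers are taken on the support). -/
noncomputable def herPow {n : Type*} [Fintype n] [DecidableEq n] (A : Matrix n n ℂ)
    (hA : A.IsHermitian) (r : ℝ) : Matrix n n ℂ :=
  (hA.eigenvectorUnitary : Matrix n n ℂ) *
    Matrix.diagonal (fun i => ((hA.eigenvalues i ^ r : ℝ) : ℂ)) *
    (star (hA.eigenvectorUnitary : Matrix n n ℂ))

/-- The sandwiched Rényi conditional entropy `H_α(A|B)_ρ` of a state `ρ` on a bipartite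
system `A × B`:
`H_α(A|B)_ρ = - inf over density matrices σ on B of
  (α/(α-1)) log ‖(I_A ⊗ σ^{(1-α)/(2α)}) ρ (I_A ⊗ σ^{(1-α)/(2α)})‖_{S_α}`. -/
noncomputable def condRenyi {A B : Type*} [Fintype A] [DecidableEq A] [Fintype B]
    [DecidableEq B] (α : ℝ) (ρ : Matrix (A × B) (A × B) ℂ) : ℝ :=
  - sInf {c : ℝ | ∃ (σ : Matrix B B ℂ) (hσ : σ.PosSemidef), σ.trace = 1 ∧
      c = α / (α - 1) * Real.log (sNorm α
        (((1 : Matrix A A ℂ) ⊗ₖ herPow σ hσ.1 ((1 - α) / (2 * α))) * ρ *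
         ((1 : Matrix A A ℂ) ⊗ₖ herPow σ hσ.1 ((1 - α) / (2 * α)))))}

theorem eig_sum_congr {n : Type*} [Fintype n] [DecidableEq n] {H : Matrix n n ℂ}
    (hH : H.IsHermitian) (d : n → ℝ)
    (h : H.charpoly = (Matrix.diagonal (fun i => (d i : ℂ))).charpoly) (f : ℝ → ℝ) :
    ∑ i, f (hH.eigenvalues i) = ∑ i, f (d i) := by
  have h1 := hH.roots_charpoly_eq_eigenvalues
  have h2 : (Matrix.diagonal (fun i => (d i : ℂ))).charpoly.roots
      = Multiset.map (fun i => (d i : ℂ)) Finset.univ.val := by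
    rw [Matrix.charpoly_diagonal, Polynomial.roots_prod]
    · simp
    · simp [Finset.prod_ne_zero_iff, Polynomial.X_sub_C_ne_zero]
  rw [h, h2] at h1
  have h3 := congrArg (fun s => (Multiset.map (fun z : ℂ => f z.re) s).sum) h1
  simp only [Multiset.map_map] at h3
  simpa using h3.symm

theorem spec_eq {n : Type*} [Fintype n] [DecidableEq n] {H : Matrix n n ℂ}
    (hH : H.IsHermitian) :
    H = (hH.eigenvectorUnitary : Matrix n n ℂ) *
      Matrix.diagonal (fun i => ((hH.eigenvalues i : ℝ) : ℂ)) *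
      (hH.eigenvectorUnitary : Matrix n n ℂ)ᴴ := by
  conv_lhs => rw [hH.spectral_theorem]
  rw [Unitary.conjStarAlgAut_apply]
  rfl

theorem uni1 {n : Type*} [Fintype n] [DecidableEq n] {H : Matrix n n ℂ}
    (hH : H.IsHermitian) :
    (hH.eigenvectorUnitary : Matrix n n ℂ)ᴴ * (hH.eigenvectorUnitary : Matrix n n ℂ) = 1 :=
  Unitary.coe_star_mul_self hH.eigenvectorUnitary

theorem uni2 {n : Type*} [Fintype n] [DecidableEq n] {H : Matrix n n ℂ}
    (hH : H.IsHermitian) :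
    (hH.eigenvectorUnitary : Matrix n n ℂ) * (hH.eigenvectorUnitary : Matrix n n ℂ)ᴴ = 1 :=
  Unitary.coe_mul_star_self hH.eigenvectorUnitary

theorem charpoly_conj {n : Type*} [Fintype n] [DecidableEq n] (V D : Matrix n n ℂ)
    (hV : Vᴴ * V = 1) : (V * D * Vᴴ).charpoly = D.charpoly := by
  rw [Matrix.charpoly_mul_comm, ← Matrix.mul_assoc, hV, Matrix.one_mul]

theorem exists_sqrt {n : Type*} [Fintype n] [DecidableEq n] {H : Matrix n n ℂ}
    (hH : H.PosSemidef) : ∃ B : Matrix n n ℂ, H = Bᴴ * B := by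
  refine ⟨Matrix.diagonal (fun i => ((Real.sqrt (hH.1.eigenvalues i) : ℝ) : ℂ)) *
    (hH.1.eigenvectorUnitary : Matrix n n ℂ)ᴴ, ?_⟩
  conv_lhs => rw [spec_eq hH.1]
  rw [Matrix.conjTranspose_mul, Matrix.conjTranspose_conjTranspose,
    Matrix.diagonal_conjTranspose]
  simp only [Matrix.mul_assoc]
  congr 1
  rw [← Matrix.mul_assoc, Matrix.diagonal_mul_diagonal]
  congr 2
  ext i
  simp only [Pi.star_apply, RCLike.star_def, Complex.conj_ofReal]
  rw [← Complex.ofReal_mul, Real.mul_self_sqrt (hH.eigenvalues_nonneg i)]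

theorem sNorm_eq {n : Type*} [Fintype n] [DecidableEq n] (p : ℝ)
    (B A M : Matrix n n ℂ) (hA : A.IsHermitian) (hMdef : M = B * (A * A) * Bᴴ)
    (hM : M.PosSemidef) :
    sNorm p (A * (Bᴴ * B) * A) = (∑ i, (hM.1.eigenvalues i) ^ p) ^ (1 / p) := by
  unfold sNorm
  congr 1
  have key : ((A * (Bᴴ * B) * A)ᴴ * (A * (Bᴴ * B) * A)).charpoly =
      (Matrix.diagonal (fun i => ((hM.1.eigenvalues i ^ 2 : ℝ) : ℂ))).charpoly := by
    have e1 : ((A * (Bᴴ * B) * A)ᴴ * (A * (Bᴴ * B) * A)) =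
        (A * Bᴴ) * (B * (A * A) * Bᴴ * (B * A)) := by
      simp only [Matrix.conjTranspose_mul, Matrix.conjTranspose_conjTranspose, hA.eq,
        Matrix.mul_assoc]
    have e2 : (B * (A * A) * Bᴴ * (B * A)) * (A * Bᴴ) = M * M := by
      rw [hMdef]; simp only [Matrix.mul_assoc]
    rw [e1, Matrix.charpoly_mul_comm, e2]
    have e3 : M * M = (hM.1.eigenvectorUnitary : Matrix n n ℂ) *
        Matrix.diagonal (fun i => ((hM.1.eigenvalues i ^ 2 : ℝ) : ℂ)) *
        (hM.1.eigenvectorUnitary : Matrix n n ℂ)ᴴ := by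
      conv_lhs => rw [spec_eq hM.1]
      have : Matrix.diagonal (fun i => ((hM.1.eigenvalues i ^ 2 : ℝ) : ℂ)) =
        Matrix.diagonal (fun i => ((hM.1.eigenvalues i : ℝ) : ℂ)) *
        Matrix.diagonal (fun i => ((hM.1.eigenvalues i : ℝ) : ℂ)) := by
        rw [Matrix.diagonal_mul_diagonal]; congr 1; ext i; push_cast; ring
      rw [this]
      simp only [Matrix.mul_assoc]
      rw [← Matrix.mul_assoc _ᴴ (hM.1.eigenvectorUnitary : Matrix n n ℂ), uni1, Matrix.one_mul]
    rw [e3, charpoly_conj _ _ (uni1 hM.1)]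
  rw [eig_sum_congr _ _ key (fun x => x ^ (p / 2))]
  refine Finset.sum_congr rfl fun i _ => ?_
  rw [← Real.rpow_natCast, ← Real.rpow_mul (hM.eigenvalues_nonneg i)]
  congr 1; push_cast; ring

theorem diag_form {m n : Type*} [Fintype m] [Fintype n] [DecidableEq n]
    (X : Matrix m n ℂ) (w : n → ℝ) (k : m) :
    (X * Matrix.diagonal (fun j => (w j : ℂ)) * Xᴴ) k k
      = ((∑ j, ‖X k j‖ ^ 2 * w j : ℝ) : ℂ) := by
  rw [Matrix.mul_apply]
  push_cast
  refine Finset.sum_congr rfl fun j _ => ?_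
  rw [Matrix.mul_diagonal, Matrix.conjTranspose_apply, RCLike.star_def, mul_right_comm,
    Complex.mul_conj, Complex.normSq_eq_norm_sq]
  push_cast; ring

theorem row_sum {m n : Type*} [Fintype m] [Fintype n] [DecidableEq n]
    (X : Matrix m n ℂ) (k : m) :
    (X * Xᴴ) k k = ((∑ j, ‖X k j‖ ^ 2 : ℝ) : ℂ) := by
  have := diag_form X (fun _ => 1) k
  simpa using this

theorem frob_inv {n : Type*} [Fintype n] [DecidableEq n] (V W : Matrix n n ℂ)
    (hV : V * Vᴴ = 1) : ∑ k, ∑ j, ‖(Vᴴ * W) k j‖ ^ 2 = ∑ k, ∑ j, ‖W k j‖ ^ 2 := by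
  have h : ∀ X : Matrix n n ℂ, ((∑ k, ∑ j, ‖X k j‖ ^ 2 : ℝ) : ℂ) = (X * Xᴴ).trace := by
    intro X
    rw [Matrix.trace, Complex.ofReal_sum]
    exact Finset.sum_congr rfl fun k _ => (row_sum X k).symm
  have : (((Vᴴ * W) * (Vᴴ * W)ᴴ).trace) = (W * Wᴴ).trace := by
    rw [Matrix.conjTranspose_mul, Matrix.conjTranspose_conjTranspose, Matrix.trace_mul_comm]
    calc (Wᴴ * V * (Vᴴ * W)).trace = (Wᴴ * (V * Vᴴ) * W).trace := by
          simp only [Matrix.mul_assoc]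
      _ = _ := by rw [hV, Matrix.mul_one, Matrix.trace_mul_comm]
  rw [← h, ← h] at this
  exact_mod_cast this

theorem schur_pow {n : Type*} [Fintype n] [DecidableEq n] {M : Matrix n n ℂ}
    (hM : M.PosSemidef) (V : Matrix n n ℂ) (hV : V * Vᴴ = 1) (hV' : Vᴴ * V = 1)
    (m : n → ℝ) (hm : ∀ k, (Vᴴ * M * V) k k = (m k : ℂ)) {q : ℝ} (hq : 1 ≤ q) :
    ∑ k, m k ^ q ≤ ∑ k, hM.1.eigenvalues k ^ q := by
  set U := (hM.1.eigenvectorUnitary : Matrix n n ℂ) with hU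
  set X := Vᴴ * U with hX
  have hmk : ∀ k, m k = ∑ j, ‖X k j‖ ^ 2 * hM.1.eigenvalues j := by
    intro k
    have h := hm k
    have e : Vᴴ * M * V = X * Matrix.diagonal (fun j => (hM.1.eigenvalues j : ℂ)) * Xᴴ := by
      conv_lhs => rw [spec_eq hM.1]
      rw [hX, Matrix.conjTranspose_mul, Matrix.conjTranspose_conjTranspose]
      simp only [Matrix.mul_assoc, hU]
    rw [e, diag_form] at h
    exact_mod_cast h.symm
  have hrow : ∀ k, ∑ j, ‖X k j‖ ^ 2 = 1 := by
    intro k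
    have h := row_sum X k
    have e : X * Xᴴ = 1 := by
      rw [hX, Matrix.conjTranspose_mul, Matrix.conjTranspose_conjTranspose]
      calc Vᴴ * U * (Uᴴ * V) = Vᴴ * (U * Uᴴ) * V := by simp only [Matrix.mul_assoc]
        _ = 1 := by rw [hU, uni2, Matrix.mul_one, hV']
    rw [e, Matrix.one_apply_eq] at h
    exact_mod_cast h.symm
  have hcol : ∀ j, ∑ k, ‖X k j‖ ^ 2 = 1 := by
    intro j
    have h := row_sum Xᴴ j
    have e : Xᴴ * Xᴴᴴ = 1 := by
      rw [hX, Matrix.conjTranspose_mul, Matrix.conjTranspose_conjTranspose]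
      rw [Matrix.conjTranspose_mul, Matrix.conjTranspose_conjTranspose]
      calc Uᴴ * V * (Vᴴ * U) = Uᴴ * (V * Vᴴ) * U := by simp only [Matrix.mul_assoc]
        _ = 1 := by rw [hV, Matrix.mul_one, hU, uni1]
    rw [e, Matrix.one_apply_eq] at h
    simp only [Matrix.conjTranspose_apply, norm_star] at h
    exact_mod_cast h.symm
  calc ∑ k, m k ^ q ≤ ∑ k, ∑ j, ‖X k j‖ ^ 2 * hM.1.eigenvalues j ^ q := by
        refine Finset.sum_le_sum fun k _ => ?_
        rw [hmk k]
        exact Real.rpow_arith_mean_le_arith_mean_rpow _ _ _ (fun _ _ => by positivity) (hrow k)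
          (fun i _ => hM.eigenvalues_nonneg i) hq
    _ = ∑ j, ∑ k, ‖X k j‖ ^ 2 * hM.1.eigenvalues j ^ q := Finset.sum_comm
    _ = _ := by
        refine Finset.sum_congr rfl fun j _ => ?_
        rw [← Finset.sum_mul, hcol, one_mul]

theorem core {n : Type*} [Fintype n] [DecidableEq n] (W : Matrix n n ℂ)
    (hW : ∑ i, ∑ j, ‖W i j‖ ^ 2 = 1) (d : n → ℝ) (hd : ∀ j, 0 ≤ d j) {t s : ℝ}
    (ht : 0 < t) (hts : t ≤ s) (hs : s < 1) {Mt Ms : Matrix n n ℂ}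
    (hMt : Mt.PosSemidef) (hMs : Ms.PosSemidef)
    (et : Mt = W * Matrix.diagonal (fun j => ((d j ^ (-t) : ℝ) : ℂ)) * Wᴴ)
    (es : Ms = W * Matrix.diagonal (fun j => ((d j ^ (-s) : ℝ) : ℂ)) * Wᴴ)
    (hS : 0 < ∑ k, hMt.1.eigenvalues k ^ (1 / (1 - t))) :
    ((∑ k, hMt.1.eigenvalues k ^ (1 / (1 - t))) ^ (1 - t)) ^ (s / t) ≤
      (∑ k, hMs.1.eigenvalues k ^ (1 / (1 - s))) ^ (1 - s) := by
  have ht1 : t < 1 := lt_of_le_of_lt hts hs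
  have hs0 : 0 < s := lt_of_lt_of_le ht hts
  have h1t : 0 < 1 - t := by linarith
  have h1s : 0 < 1 - s := by linarith
  set S := ∑ k, hMt.1.eigenvalues k ^ (1 / (1 - t)) with hSdef
  set μ := hMt.1.eigenvalues with hμ
  have hμ0 : ∀ k, 0 ≤ μ k := fun k => hMt.eigenvalues_nonneg k
  set V := (hMt.1.eigenvectorUnitary : Matrix n n ℂ) with hV
  have hV1 : Vᴴ * V = 1 := uni1 hMt.1
  have hV2 : V * Vᴴ = 1 := uni2 hMt.1
  set X := Vᴴ * W with hX
  let τ : n → ℝ := fun k => μ k ^ (1 / (1 - t)) / S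
  have hτ0 : ∀ k, 0 ≤ τ k := fun k => div_nonneg (Real.rpow_nonneg (hμ0 k) _) hS.le
  have hτ1 : ∑ k, τ k = 1 := by
    simp only [τ]; rw [← Finset.sum_div, ← hSdef, div_self hS.ne']
  have hconj : ∀ w : n → ℝ, Vᴴ * (W * Matrix.diagonal (fun j => (w j : ℂ)) * Wᴴ) * V =
      X * Matrix.diagonal (fun j => (w j : ℂ)) * Xᴴ := by
    intro w
    rw [hX, Matrix.conjTranspose_mul, Matrix.conjTranspose_conjTranspose]
    simp only [Matrix.mul_assoc]
  have hμk : ∀ k, μ k = ∑ j, ‖X k j‖ ^ 2 * d j ^ (-t) := by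
    intro k
    have h : (Vᴴ * Mt * V) k k = (μ k : ℂ) := by
      have e : Vᴴ * Mt * V = Matrix.diagonal (fun j => (μ j : ℂ)) := by
        conv_lhs => rw [spec_eq hMt.1]
        calc Vᴴ * (V * Matrix.diagonal (fun j => (μ j : ℂ)) * Vᴴ) * V
            = (Vᴴ * V) * Matrix.diagonal (fun j => (μ j : ℂ)) * (Vᴴ * V) := by
              simp only [Matrix.mul_assoc]
          _ = _ := by rw [hV1, Matrix.one_mul, Matrix.mul_one]
      rw [e, Matrix.diagonal_apply_eq]
    rw [et, hconj, diag_form] at h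
    exact_mod_cast h.symm
  let m : n → ℝ := fun k => ∑ j, ‖X k j‖ ^ 2 * d j ^ (-s)
  have hm : ∀ k, (Vᴴ * Ms * V) k k = (m k : ℂ) := by
    intro k
    rw [es, hconj, diag_form]
  have hm0 : ∀ k, 0 ≤ m k := fun k =>
    Finset.sum_nonneg fun j _ => mul_nonneg (by positivity) (Real.rpow_nonneg (hd j) _)
  have hq : 1 ≤ 1 / (1 - s) := by rw [le_div_iff₀ h1s]; linarith
  have hschur := schur_pow hMs V hV2 hV1 m hm hq
  have hfrob : ∑ k, ∑ j, ‖X k j‖ ^ 2 = 1 := by rw [hX, frob_inv V W hV2, hW]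
  -- F(t) as a trace
  have hF : S ^ (1 - t) = ∑ k, μ k * τ k ^ t := by
    have : ∀ k, μ k * τ k ^ t = μ k ^ (1 / (1 - t)) * (S ^ t)⁻¹ := by
      intro k
      simp only [τ]
      rw [Real.div_rpow (Real.rpow_nonneg (hμ0 k) _) hS.le, ← Real.rpow_mul (hμ0 k),
        mul_div_assoc', div_eq_mul_inv]
      congr 1
      have e : 1 / (1 - t) = 1 + 1 / (1 - t) * t := by field_simp; ring
      conv_rhs => rw [e]
      rw [Real.rpow_add_of_nonneg (hμ0 k) zero_le_one (by positivity), Real.rpow_one]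
    rw [Finset.sum_congr rfl fun k _ => this k, ← Finset.sum_mul, ← hSdef,
      Real.rpow_sub hS, Real.rpow_one, div_eq_mul_inv]
  have hst : 1 ≤ s / t := by rw [le_div_iff₀ ht]; linarith
  have hF2 : S ^ (1 - t) = ∑ kj : n × n, ‖X kj.1 kj.2‖ ^ 2 * (d kj.2 ^ (-t) * τ kj.1 ^ t) := by
    rw [hF, Fintype.sum_prod_type]
    refine Finset.sum_congr rfl fun k _ => ?_
    rw [hμk k, Finset.sum_mul]
    refine Finset.sum_congr rfl fun j _ => ?_
    ring
  have hjen : (S ^ (1 - t)) ^ (s / t) ≤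
      ∑ kj : n × n, ‖X kj.1 kj.2‖ ^ 2 * (d kj.2 ^ (-t) * τ kj.1 ^ t) ^ (s / t) := by
    rw [hF2]
    refine Real.rpow_arith_mean_le_arith_mean_rpow _ _ _ (fun _ _ => by positivity) ?_ ?_ hst
    · rw [Fintype.sum_prod_type]; exact hfrob
    · intro i _
      exact mul_nonneg (Real.rpow_nonneg (hd _) _) (Real.rpow_nonneg (hτ0 _) _)
  have hsum : ∑ kj : n × n, ‖X kj.1 kj.2‖ ^ 2 * (d kj.2 ^ (-t) * τ kj.1 ^ t) ^ (s / t) =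
      ∑ k, τ k ^ s * m k := by
    rw [Fintype.sum_prod_type]
    refine Finset.sum_congr rfl fun k _ => ?_
    simp only [m]
    rw [Finset.mul_sum]
    refine Finset.sum_congr rfl fun j _ => ?_
    rw [Real.mul_rpow (Real.rpow_nonneg (hd _) _) (Real.rpow_nonneg (hτ0 _) _),
      ← Real.rpow_mul (hd _), ← Real.rpow_mul (hτ0 _)]
    have e1 : -t * (s / t) = -s := by field_simp
    have e2 : t * (s / t) = s := by field_simp
    rw [e1, e2]; ring
  have hhol : ∑ k, τ k ^ s * m k ≤
      (∑ k, (τ k ^ s) ^ (1 / s)) ^ (1 / (1 / s)) *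
        (∑ k, m k ^ (1 / (1 - s))) ^ (1 / (1 / (1 - s))) := by
    refine Real.inner_le_Lp_mul_Lq_of_nonneg _ ?_ (fun k _ => Real.rpow_nonneg (hτ0 k) _)
      (fun k _ => hm0 k)
    rw [Real.holderConjugate_iff]
    refine ⟨by rw [lt_div_iff₀ hs0]; linarith, ?_⟩
    rw [one_div, one_div, inv_inv, inv_inv]; ring
  have hone : ∑ k, (τ k ^ s) ^ (1 / s) = 1 := by
    refine Eq.trans (Finset.sum_congr rfl fun k _ => ?_) hτ1
    rw [← Real.rpow_mul (hτ0 k), mul_one_div_cancel hs0.ne', Real.rpow_one]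
  rw [hone, Real.one_rpow, one_mul, one_div_one_div] at hhol
  calc (S ^ (1 - t)) ^ (s / t) ≤ ∑ k, τ k ^ s * m k := by rw [← hsum]; exact hjen
    _ ≤ _ := hhol
    _ ≤ _ := Real.rpow_le_rpow (Finset.sum_nonneg fun k _ => Real.rpow_nonneg (hm0 k) _)
        hschur h1s.le

/-- The matrix `1 ⊗ U` with `U` the eigenvector unitary of `σ`. -/
noncomputable def kU (A : Type*) {Y : Type*} [Fintype A] [DecidableEq A] [Fintype Y]
    [DecidableEq Y] {σ : Matrix Y Y ℂ} (hσ : σ.IsHermitian) : Matrix (A × Y) (A × Y) ℂ :=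
  (1 : Matrix A A ℂ) ⊗ₖ (hσ.eigenvectorUnitary : Matrix Y Y ℂ)

section
variable {A Y : Type*} [Fintype A] [DecidableEq A] [Fintype Y] [DecidableEq Y]

theorem kU1 {σ : Matrix Y Y ℂ} (hσ : σ.IsHermitian) : (kU A hσ)ᴴ * kU A hσ = 1 := by
  unfold kU
  rw [Matrix.conjTranspose_kronecker, ← Matrix.mul_kronecker_mul, uni1]
  simp

theorem kU2 {σ : Matrix Y Y ℂ} (hσ : σ.IsHermitian) : kU A hσ * (kU A hσ)ᴴ = 1 := by
  unfold kU
  rw [Matrix.conjTranspose_kronecker, ← Matrix.mul_kronecker_mul, uni2]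
  simp

theorem kron_herPow {σ : Matrix Y Y ℂ} (hσ : σ.IsHermitian) (r : ℝ) :
    (1 : Matrix A A ℂ) ⊗ₖ herPow σ hσ r = kU A hσ *
      Matrix.diagonal (fun j : A × Y => ((hσ.eigenvalues j.2 ^ r : ℝ) : ℂ)) * (kU A hσ)ᴴ := by
  have e : Matrix.diagonal (fun j : A × Y => ((hσ.eigenvalues j.2 ^ r : ℝ) : ℂ)) =
      (1 : Matrix A A ℂ) ⊗ₖ Matrix.diagonal (fun y : Y => ((hσ.eigenvalues y ^ r : ℝ) : ℂ)) := by
    rw [← Matrix.diagonal_one, Matrix.diagonal_kronecker_diagonal]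
    simp
  rw [e]
  unfold kU herPow
  rw [Matrix.conjTranspose_kronecker, ← Matrix.mul_kronecker_mul, ← Matrix.mul_kronecker_mul]
  simp [Matrix.star_eq_conjTranspose]

theorem diag_psd {n : Type*} [Fintype n] [DecidableEq n] (W : Matrix n n ℂ) (w : n → ℝ)
    (hw : ∀ j, 0 ≤ w j) : (W * Matrix.diagonal (fun j => (w j : ℂ)) * Wᴴ).PosSemidef := by
  refine Matrix.PosSemidef.mul_mul_conjTranspose_same (Matrix.PosSemidef.diagonal ?_) W
  intro j
  simpa using hw j

theorem Mm_psd (B : Matrix (A × Y) (A × Y) ℂ) {σ : Matrix Y Y ℂ} (hσ : σ.PosSemidef) (t : ℝ) :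
    ((B * kU A hσ.1) * Matrix.diagonal
      (fun j : A × Y => ((hσ.1.eigenvalues j.2 ^ (-t) : ℝ) : ℂ)) * (B * kU A hσ.1)ᴴ).PosSemidef :=
  diag_psd _ _ fun j => Real.rpow_nonneg (hσ.eigenvalues_nonneg _) _

theorem val_eq (B : Matrix (A × Y) (A × Y) ℂ) {σ : Matrix Y Y ℂ} (hσ : σ.PosSemidef) {p : ℝ}
    (hp : 1 < p) :
    sNorm p (((1 : Matrix A A ℂ) ⊗ₖ herPow σ hσ.1 ((1 - p) / (2 * p))) * (Bᴴ * B) *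
         ((1 : Matrix A A ℂ) ⊗ₖ herPow σ hσ.1 ((1 - p) / (2 * p)))) =
    (∑ i, ((Mm_psd B hσ ((p - 1) / p)).1.eigenvalues i) ^ p) ^ (1 / p) := by
  refine sNorm_eq p B _ _ ?_ ?_ (Mm_psd B hσ ((p - 1) / p))
  · rw [kron_herPow]
    exact (diag_psd _ _ fun j => Real.rpow_nonneg (hσ.eigenvalues_nonneg _) _).1
  · rw [kron_herPow]
    set Q := kU A hσ.1
    set D := Matrix.diagonal
      (fun j : A × Y => ((hσ.1.eigenvalues j.2 ^ ((1 - p) / (2 * p)) : ℝ) : ℂ)) with hD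
    have e : Matrix.diagonal
      (fun j : A × Y => ((hσ.1.eigenvalues j.2 ^ (-((p - 1) / p)) : ℝ) : ℂ)) = D * D := by
      rw [hD, Matrix.diagonal_mul_diagonal]
      congr 1
      ext j
      rw [← Complex.ofReal_mul]
      congr 1
      have h0 := hσ.eigenvalues_nonneg j.2
      have e2 : -((p - 1) / p) = (1 - p) / (2 * p) * 2 := by field_simp; ring
      rw [e2, Real.rpow_mul h0, ← sq, ← Real.rpow_natCast]
      norm_num
    rw [e, Matrix.conjTranspose_mul]
    have h1 : Qᴴ * Q = 1 := kU1 hσ.1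
    calc B * Q * (D * D) * (Qᴴ * Bᴴ) = B * (Q * D * 1 * (D * Qᴴ)) * Bᴴ := by
          simp only [Matrix.mul_assoc, Matrix.one_mul]
      _ = _ := by rw [← h1]; simp only [Matrix.mul_assoc]

theorem frob_W (B : Matrix (A × Y) (A × Y) ℂ) (hB : (Bᴴ * B).trace = 1) {σ : Matrix Y Y ℂ}
    (hσ : σ.IsHermitian) : ∑ i, ∑ j, ‖(B * kU A hσ) i j‖ ^ 2 = 1 := by
  have h : ((∑ i, ∑ j, ‖(B * kU A hσ) i j‖ ^ 2 : ℝ) : ℂ) = 1 := by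
    rw [Complex.ofReal_sum, ← hB, Matrix.trace_mul_comm]
    have e : B * Bᴴ = (B * kU A hσ) * (B * kU A hσ)ᴴ := by
      rw [Matrix.conjTranspose_mul]
      calc B * Bᴴ = B * 1 * Bᴴ := by rw [Matrix.mul_one]
        _ = _ := by rw [← kU2 hσ]; simp only [Matrix.mul_assoc]
    rw [e, Matrix.trace]
    exact Finset.sum_congr rfl fun k _ => (row_sum _ k).symm
  exact_mod_cast h

theorem eig_sum_trace {n : Type*} [Fintype n] [DecidableEq n] (W : Matrix n n ℂ) (w : n → ℝ)
    (h : (W * Matrix.diagonal (fun j => (w j : ℂ)) * Wᴴ).IsHermitian) :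
    ∑ k, h.eigenvalues k = ∑ i, ∑ j, ‖W i j‖ ^ 2 * w j := by
  have h1 := h.trace_eq_sum_eigenvalues
  rw [Matrix.trace] at h1
  simp only [Matrix.diag_apply, diag_form] at h1
  have h2 : ((∑ i, ∑ j, ‖W i j‖ ^ 2 * w j : ℝ) : ℂ) = ((∑ k, h.eigenvalues k : ℝ) : ℂ) := by
    push_cast at h1 ⊢
    exact h1
  exact (Complex.ofReal_injective h2).symm

theorem sigma_mono (B : Matrix (A × Y) (A × Y) ℂ) (hB : (Bᴴ * B).trace = 1) {σ : Matrix Y Y ℂ}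
    (hσ : σ.PosSemidef) {α β : ℝ} (hβ : 1 < β) (hβα : β ≤ α) :
    β / (β - 1) * Real.log ((∑ i, ((Mm_psd B hσ ((β - 1) / β)).1.eigenvalues i) ^ β) ^ (1 / β)) ≤
    α / (α - 1) * Real.log
      ((∑ i, ((Mm_psd B hσ ((α - 1) / α)).1.eigenvalues i) ^ α) ^ (1 / α)) := by
  have hα : 1 < α := lt_of_lt_of_le hβ hβα
  have hβ0 : 0 < β := by linarith
  have hα0 : 0 < α := by linarith
  have hβ1 : 0 < β - 1 := by linarith
  have hα1 : 0 < α - 1 := by linarith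
  set hMt := Mm_psd B hσ ((β - 1) / β)
  set hMs := Mm_psd B hσ ((α - 1) / α)
  have nt : ∀ k, 0 ≤ hMt.1.eigenvalues k := hMt.eigenvalues_nonneg
  have ns : ∀ k, 0 ≤ hMs.1.eigenvalues k := hMs.eigenvalues_nonneg
  by_cases hS : 0 < ∑ i, hMt.1.eigenvalues i ^ β
  · have et : 1 / (1 - (β - 1) / β) = β := by field_simp; ring
    have es : 1 / (1 - (α - 1) / α) = α := by field_simp; ring
    have et' : 1 - (β - 1) / β = 1 / β := by field_simp; ring
    have es' : 1 - (α - 1) / α = 1 / α := by field_simp; ring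
    have hc := core (B * kU A hσ.1) (frob_W B hB hσ.1) (fun j => hσ.1.eigenvalues j.2)
      (fun j => hσ.eigenvalues_nonneg _) (t := (β - 1) / β) (s := (α - 1) / α)
      (by positivity) (by rw [div_le_div_iff₀ hβ0 hα0]; nlinarith)
      (by rw [div_lt_one hα0]; linarith) hMt hMs rfl rfl (by rw [et]; exact hS)
    rw [et, es, et', es'] at hc
    have hpos : 0 < (∑ i, hMt.1.eigenvalues i ^ β) ^ (1 / β) := Real.rpow_pos_of_pos hS _
    have hl := Real.log_le_log (Real.rpow_pos_of_pos hpos _) hc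
    rw [Real.log_rpow hpos] at hl
    have h2 := mul_le_mul_of_nonneg_left hl (div_pos hα0 hα1).le
    refine le_trans (le_of_eq ?_) h2
    rw [← mul_assoc]
    congr 1
    field_simp
  · have hz : ∀ k, hMt.1.eigenvalues k = 0 := by
      have h0 : ∑ i, hMt.1.eigenvalues i ^ β = 0 :=
        le_antisymm (not_lt.1 hS) (Finset.sum_nonneg fun k _ => Real.rpow_nonneg (nt k) _)
      rw [Finset.sum_eq_zero_iff_of_nonneg (fun k _ => Real.rpow_nonneg (nt k) _)] at h0
      intro k
      exact (Real.rpow_eq_zero (nt k) hβ0.ne').1 (h0 k (Finset.mem_univ _))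
    have htr := eig_sum_trace _ _ hMt.1
    rw [Finset.sum_eq_zero fun k _ => hz k] at htr
    have hnn : ∀ i j, 0 ≤ ‖(B * kU A hσ.1) i j‖ ^ 2 *
        hσ.1.eigenvalues j.2 ^ (-((β - 1) / β)) := fun i j =>
      mul_nonneg (by positivity) (Real.rpow_nonneg (hσ.eigenvalues_nonneg _) _)
    have hterm : ∀ i j, ‖(B * kU A hσ.1) i j‖ ^ 2 *
        hσ.1.eigenvalues j.2 ^ (-((β - 1) / β)) = 0 := by
      intro i j
      have h1 := (Finset.sum_eq_zero_iff_of_nonneg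
        (fun i _ => Finset.sum_nonneg fun j _ => hnn i j)).1 htr.symm i (Finset.mem_univ _)
      exact (Finset.sum_eq_zero_iff_of_nonneg (fun j _ => hnn i j)).1 h1 j (Finset.mem_univ _)
    have hterm2 : ∀ i j, ‖(B * kU A hσ.1) i j‖ ^ 2 *
        hσ.1.eigenvalues j.2 ^ (-((α - 1) / α)) = 0 := by
      intro i j
      rcases mul_eq_zero.1 (hterm i j) with h | h
      · rw [h, zero_mul]
      · have hne : -((β - 1) / β) ≠ 0 := by
          have : 0 < (β - 1) / β := by positivity
          linarith
        have hne2 : -((α - 1) / α) ≠ 0 := by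
          have : 0 < (α - 1) / α := by positivity
          linarith
        rw [(Real.rpow_eq_zero (hσ.eigenvalues_nonneg _) hne).1 h, Real.zero_rpow hne2, mul_zero]
    have hts := eig_sum_trace _ _ hMs.1
    rw [Finset.sum_eq_zero (s := Finset.univ) (f := fun i => ∑ j, ‖(B * kU A hσ.1) i j‖ ^ 2 *
        hσ.1.eigenvalues j.2 ^ (-((α - 1) / α)))
        (fun i _ => Finset.sum_eq_zero fun j _ => hterm2 i j)] at hts
    have hzs : ∀ k, hMs.1.eigenvalues k = 0 := fun k =>
      (Finset.sum_eq_zero_iff_of_nonneg (fun k _ => ns k)).1 hts k (Finset.mem_univ _)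
    simp only [hz, hzs, Real.zero_rpow hβ0.ne', Real.zero_rpow hα0.ne', Finset.sum_const_zero]
    rw [Real.zero_rpow (by positivity), Real.zero_rpow (by positivity)]
    simp

/-- The quadratic form of the marginal of `Bᴴ * B` on the second system. -/
noncomputable def qf (B : Matrix (A × Y) (A × Y) ℂ) (u : Y → ℂ) : ℝ :=
  ∑ i, ∑ x, ‖∑ y, B i (x, y) * u y‖ ^ 2

theorem qf_nonneg (B : Matrix (A × Y) (A × Y) ℂ) (u : Y → ℂ) : 0 ≤ qf B u := by
  unfold qf; positivity

theorem W_apply (B : Matrix (A × Y) (A × Y) ℂ) {σ : Matrix Y Y ℂ} (hσ : σ.IsHermitian)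
    (i : A × Y) (x : A) (y : Y) : (B * kU A hσ) i (x, y) =
      ∑ y', B i (x, y') * (hσ.eigenvectorUnitary : Matrix Y Y ℂ) y' y := by
  unfold kU
  rw [Matrix.mul_apply, Fintype.sum_prod_type]
  rw [Finset.sum_eq_single x]
  · simp [Matrix.kroneckerMap_apply]
  · intro b _ hb
    simp [Matrix.kroneckerMap_apply, Matrix.one_apply, hb]
  · simp

theorem trace_qf (B : Matrix (A × Y) (A × Y) ℂ) {σ : Matrix Y Y ℂ} (hσ : σ.IsHermitian)
    (w : Y → ℝ) : ∑ i, ∑ j : A × Y, ‖(B * kU A hσ) i j‖ ^ 2 * w j.2 =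
      ∑ y, w y * qf B (fun y' => (hσ.eigenvectorUnitary : Matrix Y Y ℂ) y' y) := by
  unfold qf
  simp only [Fintype.sum_prod_type (f := fun j : A × Y => ‖(B * kU A hσ) _ j‖ ^ 2 * w j.2),
    W_apply, Finset.mul_sum]
  rw [Finset.sum_comm]
  conv_lhs => rw [Finset.sum_comm]
  conv_rhs => rw [Finset.sum_comm]
  refine Finset.sum_congr rfl fun i _ => ?_
  rw [Finset.sum_comm]
  refine Finset.sum_congr rfl fun y _ => ?_
  refine Finset.sum_congr rfl fun x _ => ?_
  ring

theorem col_unit {σ : Matrix Y Y ℂ} (hσ : σ.IsHermitian) (y : Y) :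
    ∑ y', ‖(hσ.eigenvectorUnitary : Matrix Y Y ℂ) y' y‖ ^ 2 = 1 := by
  have h := row_sum (hσ.eigenvectorUnitary : Matrix Y Y ℂ)ᴴ y
  rw [Matrix.conjTranspose_conjTranspose, uni1, Matrix.one_apply_eq] at h
  simp only [Matrix.conjTranspose_apply, norm_star] at h
  exact_mod_cast h.symm

theorem val_lower (B : Matrix (A × Y) (A × Y) ℂ) {σ : Matrix Y Y ℂ} (hσ : σ.PosSemidef)
    (htr : σ.trace = 1) {l : ℝ} (hl : 0 < l)
    (hq : ∀ u : Y → ℂ, ∑ y, ‖u y‖ ^ 2 = 1 → l ≤ qf B u) {p : ℝ} (hp : 1 < p) :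
    l / (Fintype.card (A × Y) : ℝ) ≤
    (∑ i, ((Mm_psd B hσ ((p - 1) / p)).1.eigenvalues i) ^ p) ^ (1 / p) := by
  have hp0 : 0 < p := by linarith
  set hM := Mm_psd B hσ ((p - 1) / p)
  have nM : ∀ k, 0 ≤ hM.1.eigenvalues k := hM.eigenvalues_nonneg
  have ns : ∀ k, 0 ≤ hσ.1.eigenvalues k := hσ.eigenvalues_nonneg
  have hs1 : ∑ y, hσ.1.eigenvalues y = 1 := by
    have h := hσ.1.trace_eq_sum_eigenvalues
    rw [htr] at h
    have h2 : ((∑ y, hσ.1.eigenvalues y : ℝ) : ℂ) = 1 := by push_cast; exact h.symm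
    exact_mod_cast h2
  obtain ⟨y0, hy0⟩ : ∃ y, 0 < hσ.1.eigenvalues y := by
    by_contra! hcon
    have : ∑ y, hσ.1.eigenvalues y ≤ 0 := Finset.sum_nonpos fun y _ => hcon y
    linarith
  have hy1 : hσ.1.eigenvalues y0 ≤ 1 := by
    rw [← hs1]
    exact Finset.single_le_sum (fun k _ => ns k) (Finset.mem_univ y0)
  have htrace : l ≤ ∑ k, hM.1.eigenvalues k := by
    rw [eig_sum_trace, trace_qf B hσ.1 (fun y => hσ.1.eigenvalues y ^ (-((p - 1) / p)))]
    have h1 : 1 ≤ hσ.1.eigenvalues y0 ^ (-((p - 1) / p)) := by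
      apply Real.one_le_rpow_of_pos_of_le_one_of_nonpos hy0 hy1
      have : 0 ≤ (p - 1) / p := div_nonneg (by linarith) hp0.le
      linarith
    have h2 := hq _ (col_unit hσ.1 y0)
    refine le_trans ?_ (Finset.single_le_sum (f := fun y => hσ.1.eigenvalues y ^ (-((p - 1) / p)) *
      qf B (fun y' => (hσ.1.eigenvectorUnitary : Matrix Y Y ℂ) y' y))
      (fun y _ => mul_nonneg (Real.rpow_nonneg (ns y) _) (qf_nonneg _ _)) (Finset.mem_univ y0))
    nlinarith
  obtain ⟨k, hk⟩ : ∃ k, l / (Fintype.card (A × Y) : ℝ) ≤ hM.1.eigenvalues k := by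
    by_contra! hcon
    rcases isEmpty_or_nonempty (A × Y) with he | he
    · simp at htrace; linarith
    · have : ∑ k, hM.1.eigenvalues k < ∑ _k : A × Y, l / (Fintype.card (A × Y) : ℝ) :=
        Finset.sum_lt_sum_of_nonempty Finset.univ_nonempty fun k _ => hcon k
      rw [Finset.sum_const, Finset.card_univ, nsmul_eq_mul, mul_div_cancel₀] at this
      · linarith
      · exact_mod_cast Fintype.card_ne_zero
  refine hk.trans ?_
  have h3 : hM.1.eigenvalues k ^ p ≤ ∑ i, hM.1.eigenvalues i ^ p :=
    Finset.single_le_sum (f := fun i => hM.1.eigenvalues i ^ p)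
      (fun i _ => Real.rpow_nonneg (nM i) _) (Finset.mem_univ k)
  have h4 := Real.rpow_le_rpow (Real.rpow_nonneg (nM k) _) h3 (z := 1 / p) (by positivity)
  rwa [← Real.rpow_mul (nM k), mul_one_div_cancel hp0.ne', Real.rpow_one] at h4

theorem herPow_proj {σ : Matrix Y Y ℂ} (hσ : σ.IsHermitian) (hσ2 : σ * σ = σ) {r : ℝ}
    (hr : r ≠ 0) : herPow σ hσ r = σ := by
  have hd : ∀ i, hσ.eigenvalues i * hσ.eigenvalues i = hσ.eigenvalues i := by
    intro i
    set U := (hσ.eigenvectorUnitary : Matrix Y Y ℂ) with hU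
    set D := Matrix.diagonal (fun i => ((hσ.eigenvalues i : ℝ) : ℂ)) with hD
    have e : Uᴴ * σ * U = D := by
      conv_lhs => rw [spec_eq hσ]
      calc Uᴴ * (U * D * Uᴴ) * U = (Uᴴ * U) * D * (Uᴴ * U) := by simp only [Matrix.mul_assoc]
        _ = D := by rw [hU, uni1, Matrix.one_mul, Matrix.mul_one]
    have e2 : D * D = D := by
      conv_rhs => rw [← e, ← hσ2]
      rw [← e]
      calc Uᴴ * σ * U * (Uᴴ * σ * U) = Uᴴ * σ * (U * Uᴴ) * σ * U := by
            simp only [Matrix.mul_assoc]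
        _ = _ := by rw [hU, uni2, Matrix.mul_one]; simp only [Matrix.mul_assoc]
    have e3 := congrFun (congrFun e2 i) i
    rw [hD, Matrix.diagonal_mul_diagonal, Matrix.diagonal_apply_eq, Matrix.diagonal_apply_eq] at e3
    exact_mod_cast e3
  have hpow : ∀ i, hσ.eigenvalues i ^ r = hσ.eigenvalues i := by
    intro i
    have h : hσ.eigenvalues i * (hσ.eigenvalues i - 1) = 0 := by linarith [hd i]
    rcases mul_eq_zero.1 h with h | h
    · rw [h, Real.zero_rpow hr]
    · rw [show hσ.eigenvalues i = 1 by linarith, Real.one_rpow]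
  unfold herPow
  simp only [hpow]
  exact (spec_eq hσ).symm

theorem trace_proj (B : Matrix (A × Y) (A × Y) ℂ) (u : Y → ℂ) :
    (B * ((1 : Matrix A A ℂ) ⊗ₖ Matrix.vecMulVec u (star u)) * Bᴴ).trace = ((qf B u : ℝ) : ℂ) := by
  let C : Matrix (A × Y) A ℂ := Matrix.of fun j x => if j.1 = x then u j.2 else 0
  have hC : (1 : Matrix A A ℂ) ⊗ₖ Matrix.vecMulVec u (star u) = C * Cᴴ := by
    ext ⟨x, y⟩ ⟨x', y'⟩
    rw [Matrix.mul_apply]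
    simp only [C, Matrix.conjTranspose_apply, Matrix.of_apply, Matrix.kroneckerMap_apply, Matrix.vecMulVec_apply,
      Matrix.one_apply, Pi.star_apply]
    rw [Finset.sum_eq_single x]
    · by_cases h : x = x'
      · simp [h]
      · simp [h, Ne.symm h]
    · intro b _ hb
      simp [Ne.symm hb]
    · simp
  have e : B * (C * Cᴴ) * Bᴴ = (B * C) * (B * C)ᴴ := by
    rw [Matrix.conjTranspose_mul]; simp only [Matrix.mul_assoc]
  rw [hC, e, Matrix.trace, qf, Complex.ofReal_sum]
  refine Finset.sum_congr rfl fun i _ => ?_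
  rw [Matrix.diag_apply, row_sum]
  congr 1
  refine Finset.sum_congr rfl fun x _ => ?_
  congr 2
  rw [Matrix.mul_apply, Fintype.sum_prod_type, Finset.sum_eq_single x]
  · simp [C]
  · intro b _ hb
    simp [C, hb]
  · simp

theorem pow_split {x p : ℝ} (hx : 0 ≤ x) (hp : 1 < p) : x ^ p = x * x ^ (p - 1) := by
  have e : p = 1 + (p - 1) := by ring
  conv_lhs => rw [e]
  rw [Real.rpow_add_of_nonneg hx zero_le_one (by linarith), Real.rpow_one]

theorem val_upper (B : Matrix (A × Y) (A × Y) ℂ) (u : Y → ℂ) (hu : ∑ y, ‖u y‖ ^ 2 = 1)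
    (hqu : 0 < qf B u) {p : ℝ} (hp : 1 < p) :
    ∃ (σ : Matrix Y Y ℂ) (hσ : σ.PosSemidef), σ.trace = 1 ∧
      0 < (∑ i, ((Mm_psd B hσ ((p - 1) / p)).1.eigenvalues i) ^ p) ^ (1 / p) ∧
      (∑ i, ((Mm_psd B hσ ((p - 1) / p)).1.eigenvalues i) ^ p) ^ (1 / p) ≤ qf B u := by
  have hp0 : 0 < p := by linarith
  have hdot : star u ⬝ᵥ u = 1 := by
    have : star u ⬝ᵥ u = ((∑ y, ‖u y‖ ^ 2 : ℝ) : ℂ) := by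
      rw [dotProduct]
      push_cast
      refine Finset.sum_congr rfl fun y _ => ?_
      rw [Pi.star_apply, RCLike.star_def, mul_comm, Complex.mul_conj, Complex.normSq_eq_norm_sq]
      push_cast; rfl
    rw [this, hu]; simp
  have hσ : (Matrix.vecMulVec u (star u)).PosSemidef := Matrix.posSemidef_vecMulVec_self_star u
  refine ⟨Matrix.vecMulVec u (star u), hσ, ?_, ?_⟩
  · rw [Matrix.trace_vecMulVec, dotProduct_comm, hdot]
  have hproj : Matrix.vecMulVec u (star u) * Matrix.vecMulVec u (star u) =
      Matrix.vecMulVec u (star u) := by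
    rw [Matrix.vecMulVec_mul_vecMulVec, hdot, one_smul]
  set hM := Mm_psd B hσ ((p - 1) / p) with hMdef
  have nM : ∀ k, 0 ≤ hM.1.eigenvalues k := hM.eigenvalues_nonneg
  have htr : ∑ k, hM.1.eigenvalues k = qf B u := by
    have h := hM.1.trace_eq_sum_eigenvalues
    have hne : -((p - 1) / p) ≠ 0 := by
      have : 0 < (p - 1) / p := div_pos (by linarith) hp0
      linarith
    have e : (B * kU A hσ.1) * Matrix.diagonal
        (fun j : A × Y => ((hσ.1.eigenvalues j.2 ^ (-((p - 1) / p)) : ℝ) : ℂ)) *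
        (B * kU A hσ.1)ᴴ = B * ((1 : Matrix A A ℂ) ⊗ₖ Matrix.vecMulVec u (star u)) * Bᴴ := by
      have e2 := kron_herPow (A := A) hσ.1 (-((p - 1) / p))
      rw [herPow_proj hσ.1 hproj hne] at e2
      rw [e2, Matrix.conjTranspose_mul]
      simp only [Matrix.mul_assoc]
    have h2 := (congrArg Matrix.trace e).symm.trans h
    rw [trace_proj] at h2
    have h3 : ((∑ y, hM.1.eigenvalues y : ℝ) : ℂ) = ((qf B u : ℝ) : ℂ) := by
      push_cast; exact h2.symm
    exact_mod_cast h3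
  set T := qf B u
  have hle : ∀ k, hM.1.eigenvalues k ≤ T := fun k => by
    rw [← htr]; exact Finset.single_le_sum (fun k _ => nM k) (Finset.mem_univ k)
  constructor
  · apply Real.rpow_pos_of_pos
    refine lt_of_le_of_ne (Finset.sum_nonneg fun k _ => Real.rpow_nonneg (nM k) _) fun h0 => ?_
    have h1 := (Finset.sum_eq_zero_iff_of_nonneg (fun k _ => Real.rpow_nonneg (nM k) _)).1 h0.symm
    have h2 : ∑ k, hM.1.eigenvalues k = 0 := Finset.sum_eq_zero fun k hk =>
      (Real.rpow_eq_zero (nM k) hp0.ne').1 (h1 k hk)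
    rw [htr] at h2
    exact hqu.ne' h2
  · have h1 : ∑ k, hM.1.eigenvalues k ^ p ≤ T ^ p := by
      calc ∑ k, hM.1.eigenvalues k ^ p ≤ ∑ k, hM.1.eigenvalues k * T ^ (p - 1) := by
            refine Finset.sum_le_sum fun k _ => ?_
            rw [pow_split (nM k) hp]
            exact mul_le_mul_of_nonneg_left
              (Real.rpow_le_rpow (nM k) (hle k) (by linarith)) (nM k)
        _ = T ^ p := by
            rw [← Finset.sum_mul, htr, pow_split hqu.le hp]
    have h4 := Real.rpow_le_rpow (Finset.sum_nonneg fun k _ => Real.rpow_nonneg (nM k) _) h1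
      (z := 1 / p) (by positivity)
    rwa [← Real.rpow_mul hqu.le, mul_one_div_cancel hp0.ne', Real.rpow_one] at h4

theorem small_vec (B : Matrix (A × Y) (A × Y) ℂ) (v w : EuclideanSpace ℂ Y) (hv : ‖v‖ = 1)
    (hw : ‖w‖ = 1) (hqv : qf B v = 0) (hqw : 0 < qf B w) {δ : ℝ} (hδ : 0 < δ) :
    ∃ u : Y → ℂ, ∑ y, ‖u y‖ ^ 2 = 1 ∧ 0 < qf B u ∧ qf B u < δ := by
  set c := qf B w with hc
  set ε := min (1 / 2) (δ / (4 * c)) with hε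
  have hε0 : 0 < ε := lt_min (by norm_num) (by positivity)
  have hε1 : ε ≤ 1 / 2 := min_le_left _ _
  have hε2 : ε * (4 * c) ≤ δ := by
    have := min_le_right (1 / 2) (δ / (4 * c))
    rwa [← hε, le_div_iff₀ (by positivity)] at this
  set z := v + (ε : ℂ) • w with hz
  have hnz : 1 / 2 ≤ ‖z‖ := by
    have h1 : ‖v‖ - ‖-((ε : ℂ) • w)‖ ≤ ‖v - -((ε : ℂ) • w)‖ := norm_sub_norm_le _ _
    rw [sub_neg_eq_add, norm_neg, norm_smul, hv, hw, Complex.norm_real, Real.norm_eq_abs,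
      abs_of_pos hε0] at h1
    linarith
  have hqz : qf B z = ε ^ 2 * c := by
    have hv0 : ∀ i x, ∑ y, B i (x, y) * v y = 0 := by
      intro i x
      unfold qf at hqv
      have h1 := (Finset.sum_eq_zero_iff_of_nonneg
        (fun i _ => Finset.sum_nonneg fun x _ => by positivity)).1 hqv i (Finset.mem_univ _)
      have h2 := (Finset.sum_eq_zero_iff_of_nonneg (fun x _ => by positivity)).1 h1 x
        (Finset.mem_univ _)
      simpa using h2
    rw [hc]
    unfold qf
    rw [Finset.mul_sum]
    refine Finset.sum_congr rfl fun i _ => ?_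
    rw [Finset.mul_sum]
    refine Finset.sum_congr rfl fun x _ => ?_
    have : ∑ y, B i (x, y) * z y = (ε : ℂ) * ∑ y, B i (x, y) * w y := by
      rw [← zero_add ((ε : ℂ) * _), ← hv0 i x, Finset.mul_sum, ← Finset.sum_add_distrib]
      refine Finset.sum_congr rfl fun y _ => ?_
      simp [hz]; ring
    rw [this, norm_mul, mul_pow, Complex.norm_real, Real.norm_eq_abs, sq_abs]
  have hqu : qf B (fun y => ((‖z‖⁻¹ : ℝ) : ℂ) * z y) = ‖z‖⁻¹ ^ 2 * (ε ^ 2 * c) := by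
    rw [← hqz]
    unfold qf
    rw [Finset.mul_sum]
    refine Finset.sum_congr rfl fun i _ => ?_
    rw [Finset.mul_sum]
    refine Finset.sum_congr rfl fun x _ => ?_
    have : ∑ y, B i (x, y) * (((‖z‖⁻¹ : ℝ) : ℂ) * z y) =
        ((‖z‖⁻¹ : ℝ) : ℂ) * ∑ y, B i (x, y) * z y := by
      rw [Finset.mul_sum]
      refine Finset.sum_congr rfl fun y _ => ?_
      ring
    rw [this, norm_mul, mul_pow, Complex.norm_real, Real.norm_eq_abs, sq_abs]
  have hz0 : 0 < ‖z‖ := by linarith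
  refine ⟨fun y => ((‖z‖⁻¹ : ℝ) : ℂ) * z y, ?_, ?_, ?_⟩
  · simp only [norm_mul, mul_pow, Complex.norm_real, Real.norm_eq_abs, sq_abs]
    rw [← Finset.mul_sum, ← EuclideanSpace.norm_sq_eq, ← mul_pow, inv_mul_cancel₀ hz0.ne', one_pow]
  · rw [hqu]; positivity
  · rw [hqu]
    have h1 : ‖z‖⁻¹ ≤ 2 := by
      rw [inv_le_comm₀ hz0 (by norm_num)]; linarith
    have h2 : ‖z‖⁻¹ ^ 2 ≤ 4 := by
      have : 0 ≤ ‖z‖⁻¹ := by positivity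
      nlinarith
    have h3 : ‖z‖⁻¹ ^ 2 * (ε ^ 2 * c) ≤ 4 * (ε ^ 2 * c) :=
      mul_le_mul_of_nonneg_right h2 (by positivity)
    nlinarith

theorem dichotomy (B : Matrix (A × Y) (A × Y) ℂ) (hB : (Bᴴ * B).trace = 1) :
    (∃ l : ℝ, 0 < l ∧ ∀ u : Y → ℂ, ∑ y, ‖u y‖ ^ 2 = 1 → l ≤ qf B u) ∨
    (∀ δ : ℝ, 0 < δ → ∃ u : Y → ℂ, ∑ y, ‖u y‖ ^ 2 = 1 ∧ 0 < qf B u ∧ qf B u < δ) := by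
  have hfro : ∑ i, ∑ j, ‖B i j‖ ^ 2 = 1 := by
    have h : ((∑ i, ∑ j, ‖B i j‖ ^ 2 : ℝ) : ℂ) = 1 := by
      rw [Complex.ofReal_sum, ← hB, Matrix.trace_mul_comm, Matrix.trace]
      exact Finset.sum_congr rfl fun k _ => (row_sum _ k).symm
    exact_mod_cast h
  obtain ⟨y0, hy0⟩ : ∃ y0 : Y, 0 < qf B (EuclideanSpace.single y0 (1 : ℂ)) := by
    by_contra! hcon
    have h0 : ∀ i j, B i j = 0 := by
      rintro i ⟨x, y⟩
      have hq := le_antisymm (hcon y) (qf_nonneg _ _)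
      unfold qf at hq
      have h1 := (Finset.sum_eq_zero_iff_of_nonneg
        (fun i _ => Finset.sum_nonneg fun x _ => by positivity)).1 hq i (Finset.mem_univ _)
      have h2 := (Finset.sum_eq_zero_iff_of_nonneg (fun x _ => by positivity)).1 h1 x
        (Finset.mem_univ _)
      simpa [Pi.single_apply] using h2
    simp [h0] at hfro
  have hne : (Metric.sphere (0 : EuclideanSpace ℂ Y) 1).Nonempty :=
    ⟨EuclideanSpace.single y0 1, by simp⟩
  have hcont : Continuous fun u : EuclideanSpace ℂ Y => qf B u := by
    unfold qf; fun_prop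
  obtain ⟨v, hv, hmin⟩ := (isCompact_sphere (0 : EuclideanSpace ℂ Y) 1).exists_isMinOn hne
    hcont.continuousOn
  rcases (qf_nonneg B v).lt_or_eq with h | h
  · left
    refine ⟨qf B v, h, fun u hu => ?_⟩
    have hmem : WithLp.toLp 2 u ∈ Metric.sphere (0 : EuclideanSpace ℂ Y) 1 := by
      rw [mem_sphere_zero_iff_norm, EuclideanSpace.norm_eq]
      simp [hu]
    exact hmin hmem
  · right
    intro δ hδ
    exact small_vec B v (EuclideanSpace.single y0 1) (by simpa using hv) (by simp) h.symm hy0 hδ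

theorem condRenyi_mono (α β : ℝ) (hβ : 1 < β) (hβα : β ≤ α)
    (ρ : Matrix (A × Y) (A × Y) ℂ) (hρ : ρ.PosSemidef) (hρ1 : ρ.trace = 1) :
    condRenyi α ρ ≤ condRenyi β ρ := by
  obtain ⟨B, rfl⟩ := exists_sqrt hρ
  have hα : 1 < α := lt_of_lt_of_le hβ hβα
  let S : ℝ → Set ℝ := fun p => {c : ℝ | ∃ (σ : Matrix Y Y ℂ) (hσ : σ.PosSemidef), σ.trace = 1 ∧
      c = p / (p - 1) * Real.log
        ((∑ i, ((Mm_psd B hσ ((p - 1) / p)).1.eigenvalues i) ^ p) ^ (1 / p))}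
  have hS : ∀ p, 1 < p → condRenyi p (Bᴴ * B) = - sInf (S p) := by
    intro p hp
    rw [condRenyi]
    refine congrArg (fun s : Set ℝ => - sInf s) (Set.ext fun c => ?_)
    constructor
    · rintro ⟨σ, hσ, h1, h2⟩
      exact ⟨σ, hσ, h1, by rw [h2, val_eq B hσ hp]⟩
    · rintro ⟨σ, hσ, h1, h2⟩
      exact ⟨σ, hσ, h1, by rw [h2, val_eq B hσ hp]⟩
  rw [hS α hα, hS β hβ]
  apply neg_le_neg
  rcases dichotomy B hρ1 with ⟨l, hl, hq⟩ | hsmall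
  · have hAY : Nonempty (A × Y) := by
      by_contra hcon
      rw [not_nonempty_iff] at hcon
      simp [Matrix.trace] at hρ1
    have hcard : 0 < (Fintype.card (A × Y) : ℝ) := by exact_mod_cast Fintype.card_pos
    have hbdd : BddBelow (S β) := by
      refine ⟨β / (β - 1) * Real.log (l / (Fintype.card (A × Y) : ℝ)), ?_⟩
      rintro c ⟨σ, hσ, h1, rfl⟩
      exact mul_le_mul_of_nonneg_left
        (Real.log_le_log (by positivity) (val_lower B hσ h1 hl hq hβ))
        (div_nonneg (by linarith) (by linarith))
    have hnonempty : (S α).Nonempty := by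
      obtain ⟨x, y⟩ := hAY.some
      let u : Y → ℂ := Pi.single y 1
      have hu : ∑ y, ‖u y‖ ^ 2 = 1 := by
        rw [Finset.sum_eq_single y]
        · simp [u]
        · intro b _ hb; simp [u, hb]
        · simp
      obtain ⟨σ, hσ, h1, -⟩ := val_upper B u hu (lt_of_lt_of_le hl (hq u hu)) hα
      exact ⟨_, σ, hσ, h1, rfl⟩
    refine le_csInf hnonempty ?_
    rintro c ⟨σ, hσ, h1, rfl⟩
    exact (csInf_le hbdd ⟨σ, hσ, h1, rfl⟩).trans (sigma_mono B hρ1 hσ hβ hβα)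
  · have hun : ∀ p, 1 < p → sInf (S p) = 0 := by
      intro p hp
      apply Real.sInf_of_not_bddBelow
      rintro ⟨b, hb⟩
      have hp1 : 0 < p / (p - 1) := div_pos (by linarith) (by linarith)
      obtain ⟨u, hu, h0, hlt⟩ := hsmall (Real.exp (b / (p / (p - 1)))) (Real.exp_pos _)
      obtain ⟨σ, hσ, h1, h2, h3⟩ := val_upper B u hu h0 hp
      have h4 := hb ⟨σ, hσ, h1, rfl⟩
      have h5 := Real.log_lt_log h2 (h3.trans_lt hlt)
      rw [Real.log_exp, lt_div_iff₀ hp1] at h5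
      linarith
    rw [hun α hα, hun β hβ]

end

/-- the sandwiched Rényi conditional entropy is monotone non-increasing in `α`:
for `1 < β ≤ α`, `H_α(X|Y)_ρ ≤ H_β(X|Y)_ρ`. -/
theorem stmt8 {dX dY : ℕ} (α β : ℝ) (hβ : 1 < β) (hβα : β ≤ α)
    (ρ : Matrix (Fin dX × Fin dY) (Fin dX × Fin dY) ℂ)
    (hρ : ρ.PosSemidef) (hρ1 : ρ.trace = 1) :
    condRenyi α ρ ≤ condRenyi β ρ := by
  exact condRenyi_mono α β hβ hβα ρ hρ hρ1
end
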